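/- There exists a constant C > 0 depending only on n and C₀ such that for all θ ∈ (0,1) and all r ≥ ε: ε^{n−2} r^{5−2n} ∫_{{x̄ ∈ ℝ^{n−1} : 4r/3 ≤ |x̄| ≤ 5r/3}} Σ_{i,j=1}^{n−1} (∂_nH_{ij}(x̄,0))² dx̄ ≤ θ ε^{n−2} Σ_{i,j=1}^{n−1} Σ_{1≤|α|≤d} h_{ij,α}² r^{2|α|+2−n} + C ∫_{{x̄ ∈ ℝ^{n−1} : r ≤ |x̄| ≤ 2r}} (−∂_nU_ε) U_ε S_{nn}²(x̄,0) dx̄ + (C/θ) ∫_{B⁺_{2r}(0)∖B⁺_r(0)} Σ_{i,j=1}^{n−1} Q_{ij,n}² dx. -/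

import Mathlib

open MeasureTheory

/-!
On `{xₙ = 0}` the boundary conditions give `T_in = 0`, so there `Q_{ij,n} = U ∂ₙT_ij`. The
derivative bounds on `H` and `V` show that on the annulus `Q_{ij,n}` at height `t ≤ δr` differs from
this boundary value by at most a multiple of `δ (ε/r²)^{(n-2)/2} r⁻¹ ∑ |h| r^{|α|}`. Moreover
`∂ₙH = ∂ₙT + ∂ₙS`, and the boundary identity bounds `U ∂ₙS_ij` by a multiple of `∂ₙU S_nn`, whose
square is absorbed by `(-∂ₙU) U S_nn²` since `r (∂ₙU)² ≤ (n-2) (-∂ₙU) U` for `|x| ≥ r`. Averaging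
over `t ∈ [0, δr]` and integrating over the annulus turns `Q²` into an integral over the half shell,
at the price of a factor `1/δ`; the choice `δ = θ/(1+K)`, with `K` the constant of the error term,
makes the error term at most `θ` times the coefficient sum.
-/

namespace HalfSpaceBubble

section PartialDerivatives

variable {ι F : Type*} [DecidableEq ι] [NormedAddCommGroup F] [NormedSpace ℝ F]

/-- The partial derivative `∂_a f`; it is `0` at points where `f` is not differentiable. -/
noncomputable def partialDeriv (a : ι) (f : (ι → ℝ) → F) (x : ι → ℝ) : F :=
  fderiv ℝ f x (Pi.single a 1)

theorem partialDeriv_sub [Finite ι] {f g : (ι → ℝ) → F} (hf : Differentiable ℝ f)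
    (hg : Differentiable ℝ g) (a : ι) (x : ι → ℝ) :
    partialDeriv a (fun y ↦ f y - g y) x = partialDeriv a f x - partialDeriv a g x := by
  cases nonempty_fintype ι
  simp only [partialDeriv, fderiv_fun_sub (hf x) (hg x), sub_apply]

variable [Fintype ι]

theorem contDiff_partialDeriv {l : ℕ} {f : (ι → ℝ) → F} (hf : ContDiff ℝ (l + 1) f) (a : ι) :
    ContDiff ℝ l (partialDeriv a f) :=
  (hf.fderiv_right le_rfl).clm_apply contDiff_const

theorem differentiable_partialDeriv {f : (ι → ℝ) → F} (hf : ContDiff ℝ 2 f) (a : ι) :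
    Differentiable ℝ (partialDeriv a f) :=
  (contDiff_partialDeriv (l := 1) hf a).differentiable one_ne_zero

theorem continuous_partialDeriv {f : (ι → ℝ) → F} (hf : ContDiff ℝ 1 f) (a : ι) :
    Continuous (partialDeriv a f) :=
  (contDiff_partialDeriv (l := 0) hf a).continuous

theorem partialDeriv_iteratedFDeriv {l : ℕ} {f : (ι → ℝ) → F} (hf : ContDiff ℝ (l + 1) f)
    (a : ι) (v : Fin l → ι → ℝ) (x : ι → ℝ) :
    partialDeriv a (fun y ↦ iteratedFDeriv ℝ l f y v) x
      = iteratedFDeriv ℝ (l + 1) f x (Fin.cons (Pi.single a 1) v) := by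
  have hd : DifferentiableAt ℝ (iteratedFDeriv ℝ l f) x :=
    hf.differentiable_iteratedFDeriv (by exact_mod_cast Nat.lt_succ_self l) x
  simp [partialDeriv, fderiv_continuousMultilinear_apply_const hd, iteratedFDeriv_succ_apply_left]

end PartialDerivatives

section Polynomials

open MvPolynomial

variable {σ : Type*}

theorem contDiff_eval [Fintype σ] (p : MvPolynomial σ ℝ) {l : ℕ∞} :
    ContDiff ℝ l fun x : σ → ℝ ↦ eval x p :=
  (AnalyticOnNhd.eval_mvPolynomial p).contDiff.of_le le_top

theorem partialDeriv_eval [Finite σ] [DecidableEq σ] (c : σ) (p : MvPolynomial σ ℝ) :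
    partialDeriv c (fun x ↦ eval x p) = fun x ↦ eval x (pderiv c p) := by
  cases nonempty_fintype σ
  have hdiff (q : MvPolynomial σ ℝ) (x : σ → ℝ) : DifferentiableAt ℝ (fun y ↦ eval y q) x :=
    (contDiff_eval q (l := 1)).differentiable one_ne_zero x
  funext x
  induction p using MvPolynomial.induction_on with
  | C a => simp [partialDeriv]
  | add p q hp hq =>
    simp only [partialDeriv, map_add] at hp hq ⊢
    rw [fderiv_fun_add (hdiff p x) (hdiff q x), add_apply, hp, hq]
  | mul_X p i hp =>
    simp only [partialDeriv, map_mul, eval_X] at hp ⊢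
    have hproj : fderiv ℝ (fun y : σ → ℝ ↦ y i) x = ContinuousLinearMap.proj i :=
      (ContinuousLinearMap.proj (R := ℝ) (φ := fun _ : σ ↦ ℝ) i).fderiv
    rw [fderiv_fun_mul (hdiff p x) (differentiableAt_apply i x), hproj]
    rcases eq_or_ne i c with rfl | hic
    · simp [hp]
    · simp [hp, hic, pderiv_X]

/-- The weighted `ℓ¹` norm `∑ |p_m| R ^ |m|` of the coefficients of `p`, which bounds `|p|` on the
cube of half-side `R`. -/
noncomputable def coeffNorm (p : MvPolynomial σ ℝ) (R : ℝ) : ℝ :=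
  ∑ m ∈ p.support, |p.coeff m| * R ^ m.degree

theorem coeffNorm_nonneg (p : MvPolynomial σ ℝ) {R : ℝ} (hR : 0 ≤ R) : 0 ≤ coeffNorm p R :=
  Finset.sum_nonneg fun _ _ ↦ by positivity

theorem degree_le_of_mem_support {p : MvPolynomial σ ℝ} {d : ℕ} (hp : p.totalDegree ≤ d)
    {m : σ →₀ ℕ} (hm : m ∈ p.support) : m.degree ≤ d :=
  (le_totalDegree hm).trans hp

theorem abs_eval_le_coeffNorm {x : σ → ℝ} {R : ℝ} (hx : ∀ c, |x c| ≤ R) (p : MvPolynomial σ ℝ) :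
    |eval x p| ≤ coeffNorm p R := by
  rw [eval_eq]
  refine (Finset.abs_sum_le_sum_abs _ _).trans (Finset.sum_le_sum fun m _ ↦ ?_)
  rw [abs_mul, Finset.abs_prod, Finsupp.degree_apply, ← Finset.prod_pow_eq_pow_sum]
  gcongr with c
  rw [abs_pow]
  gcongr
  exact hx c

theorem add_single_mem_support_of_mem_support_pderiv {p : MvPolynomial σ ℝ} {c : σ} {m : σ →₀ ℕ}
    (hm : m ∈ (pderiv c p).support) : m + Finsupp.single c 1 ∈ p.support := by
  rw [mem_support_iff, coeff_pderiv] at hm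
  exact mem_support_iff.2 (left_ne_zero_of_mul hm)

theorem totalDegree_pderiv_le (c : σ) (p : MvPolynomial σ ℝ) :
    (pderiv c p).totalDegree ≤ p.totalDegree := by
  refine Finset.sup_le fun m hm ↦ ?_
  have h : (m + Finsupp.single c 1).degree ≤ p.totalDegree :=
    le_totalDegree (add_single_mem_support_of_mem_support_pderiv hm)
  rw [map_add, Finsupp.degree_single] at h
  exact (Nat.le_succ _).trans h

theorem mul_coeffNorm_pderiv_le {p : MvPolynomial σ ℝ} {d : ℕ} (hp : p.totalDegree ≤ d) (c : σ)
    {R : ℝ} (hR : 0 ≤ R) : R * coeffNorm (pderiv c p) R ≤ d * coeffNorm p R := by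
  let shift := addRightEmbedding (Finsupp.single c 1 : σ →₀ ℕ)
  have hterm (m) (hm : m ∈ (pderiv c p).support) : R * (|(pderiv c p).coeff m| * R ^ m.degree)
      ≤ d * (|p.coeff (shift m)| * R ^ (shift m).degree) := by
    have hdeg : (shift m).degree = m.degree + 1 := by simp [shift]
    have hle : m c + 1 ≤ d := by
      have h1 := degree_le_of_mem_support hp (add_single_mem_support_of_mem_support_pderiv hm)
      have h2 : (shift m) c ≤ (shift m).degree := Finsupp.le_degree c _
      simp only [shift, addRightEmbedding_apply, Finsupp.add_apply, Finsupp.single_eq_same] at h1 h2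
      exact h2.trans h1
    have hle' : (m c + 1 : ℝ) ≤ d := by exact_mod_cast hle
    calc R * (|(pderiv c p).coeff m| * R ^ m.degree)
        = (m c + 1) * (|p.coeff (shift m)| * R ^ (shift m).degree) := by
          rw [hdeg, coeff_pderiv, abs_mul, abs_of_nonneg (by positivity : (0 : ℝ) ≤ m c + 1)]
          simp only [shift, addRightEmbedding_apply]
          ring
      _ ≤ _ := by gcongr
  calc R * coeffNorm (pderiv c p) R
      ≤ ∑ m ∈ (pderiv c p).support, d * (|p.coeff (shift m)| * R ^ (shift m).degree) := by
        rw [coeffNorm, Finset.mul_sum]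
        exact Finset.sum_le_sum hterm
    _ = d * ∑ m ∈ (pderiv c p).support.map shift, |p.coeff m| * R ^ m.degree := by
        rw [Finset.sum_map, Finset.mul_sum]
    _ ≤ d * coeffNorm p R := by
        unfold coeffNorm
        gcongr
        intro m hm
        obtain ⟨m', hm', rfl⟩ := Finset.mem_map.1 hm
        exact add_single_mem_support_of_mem_support_pderiv hm'

theorem coeffNorm_two_mul_le {p : MvPolynomial σ ℝ} {d : ℕ} (hp : p.totalDegree ≤ d) {r : ℝ}
    (hr : 0 ≤ r) : coeffNorm p (2 * r) ≤ 2 ^ d * coeffNorm p r := by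
  rw [coeffNorm, coeffNorm, Finset.mul_sum]
  refine Finset.sum_le_sum fun m hm ↦ ?_
  calc |p.coeff m| * (2 * r) ^ m.degree = 2 ^ m.degree * (|p.coeff m| * r ^ m.degree) := by ring
    _ ≤ 2 ^ d * (|p.coeff m| * r ^ m.degree) := by
        gcongr
        · norm_num
        · exact degree_le_of_mem_support hp hm

theorem card_support_le [Fintype σ] {p : MvPolynomial σ ℝ} {d : ℕ} (hp : p.totalDegree ≤ d) :
    p.support.card ≤ (d + 1) ^ Fintype.card σ := by
  classical
  have h : p.support.card ≤ (Fintype.piFinset fun _ : σ ↦ Finset.range (d + 1)).card := by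
    refine Finset.card_le_card_of_injOn (fun m ↦ ⇑m) (fun m hm ↦ ?_)
      DFunLike.coe_injective.injOn
    simp only [Finset.mem_coe, Fintype.mem_piFinset, Finset.mem_range]
    exact fun c ↦ Nat.lt_succ_of_le
      ((Finsupp.le_degree c m).trans (degree_le_of_mem_support hp hm))
  simpa using h

theorem sq_coeffNorm_le [Fintype σ] {p : MvPolynomial σ ℝ} {d : ℕ} (hp : p.totalDegree ≤ d)
    (r : ℝ) : coeffNorm p r ^ 2
      ≤ (d + 1) ^ Fintype.card σ * ∑ m ∈ p.support, p.coeff m ^ 2 * (r ^ m.degree) ^ 2 := by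
  have hcard : (p.support.card : ℝ) ≤ (d + 1) ^ Fintype.card σ := by
    exact_mod_cast card_support_le hp
  calc coeffNorm p r ^ 2 ≤ p.support.card * ∑ m ∈ p.support, (|p.coeff m| * r ^ m.degree) ^ 2 :=
        sq_sum_le_card_mul_sum_sq
    _ = p.support.card * ∑ m ∈ p.support, p.coeff m ^ 2 * (r ^ m.degree) ^ 2 := by
        simp only [mul_pow, sq_abs]
    _ ≤ _ := by gcongr

end Polynomials

section Geometry

variable {k n : ℕ}

/-- The Euclidean norm of a coordinate vector; the norm that Mathlib puts on `Fin n → ℝ` is the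
sup norm. -/
noncomputable def euclNorm (x : Fin n → ℝ) : ℝ :=
  Real.sqrt (∑ i, x i ^ 2)

theorem euclNorm_sq (x : Fin n → ℝ) : euclNorm x ^ 2 = ∑ i, x i ^ 2 :=
  Real.sq_sqrt (by positivity)

theorem euclNorm_nonneg (x : Fin n → ℝ) : 0 ≤ euclNorm x :=
  Real.sqrt_nonneg _

theorem abs_apply_le_euclNorm (x : Fin n → ℝ) (i : Fin n) : |x i| ≤ euclNorm x :=
  Real.abs_le_sqrt (Finset.single_le_sum (f := fun i ↦ x i ^ 2) (fun _ _ ↦ sq_nonneg _)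
    (Finset.mem_univ i))

theorem continuous_euclNorm : Continuous (euclNorm (n := n)) := by
  unfold euclNorm
  fun_prop

/-- The closed annulus `{s ≤ |x| ≤ t}`. -/
def annulus (n : ℕ) (s t : ℝ) : Set (Fin n → ℝ) :=
  {x | s ≤ euclNorm x ∧ euclNorm x ≤ t}

/-- The half shell `B⁺_{2r} ∖ B⁺_r`. -/
def upperShell (k : ℕ) (r : ℝ) : Set (Fin (k + 1) → ℝ) :=
  {x | 0 ≤ x (Fin.last k) ∧ r ≤ euclNorm x ∧ euclNorm x < 2 * r}

theorem annulus_subset_Icc (n : ℕ) (s t : ℝ) :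
    annulus n s t ⊆ Set.Icc (fun _ ↦ -t) (fun _ ↦ t) := fun x hx ↦
  ⟨fun i ↦ (abs_le.1 ((abs_apply_le_euclNorm x i).trans hx.2)).1,
    fun i ↦ (abs_le.1 ((abs_apply_le_euclNorm x i).trans hx.2)).2⟩

theorem isCompact_annulus (n : ℕ) (s t : ℝ) : IsCompact (annulus n s t) :=
  isCompact_Icc.of_isClosed_subset
    ((isClosed_le continuous_const continuous_euclNorm).inter
      (isClosed_le continuous_euclNorm continuous_const)) (annulus_subset_Icc n s t)

theorem volume_real_annulus_le (n : ℕ) (s : ℝ) {t : ℝ} (ht : 0 ≤ t) :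
    volume.real (annulus n s t) ≤ (2 * t) ^ n := by
  calc volume.real (annulus n s t)
      ≤ volume.real (Set.Icc (fun _ : Fin n ↦ -t) fun _ ↦ t) :=
        measureReal_mono (annulus_subset_Icc n s t) isCompact_Icc.measure_ne_top
    _ = (2 * t) ^ n := by
        rw [measureReal_def, Real.volume_Icc_pi_toReal fun _ ↦ by linarith]
        simp [two_mul]

/-- The point `(x', t)` with last coordinate `t`. -/
abbrev slice (x' : Fin k → ℝ) (t : ℝ) : Fin (k + 1) → ℝ :=
  Fin.snoc (α := fun _ ↦ ℝ) x' t

theorem slice_last (x' : Fin k → ℝ) (t : ℝ) : slice x' t (Fin.last k) = t :=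
  Fin.snoc_last _ _

theorem euclNorm_slice_sq (x' : Fin k → ℝ) (t : ℝ) :
    euclNorm (slice x' t) ^ 2 = euclNorm x' ^ 2 + t ^ 2 := by
  simp [euclNorm_sq, Fin.sum_univ_castSucc]

theorem continuous_slice : Continuous fun z : (Fin k → ℝ) × ℝ ↦ slice z.1 z.2 :=
  Continuous.finSnoc (A := fun _ ↦ ℝ) continuous_fst continuous_snd

theorem continuous_slice_zero : Continuous fun x' : Fin k → ℝ ↦ slice x' 0 :=
  continuous_slice.comp (Continuous.prodMk_left 0)

theorem hasDerivAt_slice (x' : Fin k → ℝ) (t : ℝ) :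
    HasDerivAt (slice x') (Pi.single (Fin.last k) 1) t := by
  refine hasDerivAt_pi.2 fun a ↦ ?_
  induction a using Fin.lastCases with
  | last => simpa using! hasDerivAt_id' t
  | cast i => simpa using hasDerivAt_const t (x' i)

theorem hasDerivAt_comp_slice {f : (Fin (k + 1) → ℝ) → ℝ} {x' : Fin k → ℝ} {t : ℝ}
    (hf : DifferentiableAt ℝ f (slice x' t)) :
    HasDerivAt (fun s ↦ f (slice x' s)) (partialDeriv (Fin.last k) f (slice x' t)) t :=
  hf.hasFDerivAt.comp_hasDerivAt t (hasDerivAt_slice x' t)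

theorem slice_mem_upperShell {x' : Fin k → ℝ} {r t : ℝ} (hr : 0 < r)
    (hx' : x' ∈ annulus k (4 * r / 3) (5 * r / 3)) (ht : t ∈ Set.Icc 0 r) :
    slice x' t ∈ upperShell k r := by
  have hsq := euclNorm_slice_sq x' t
  have hx'0 := euclNorm_nonneg x'
  have hnn := euclNorm_nonneg (slice x' t)
  obtain ⟨hlo, hhi⟩ := hx'
  obtain ⟨ht0, htr⟩ := ht
  refine ⟨(slice_last x' t).symm ▸ ht0, ?_, ?_⟩
  · exact abs_le_of_sq_le_sq' (by nlinarith) hnn |>.2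
  · exact lt_of_pow_lt_pow_left₀ 2 (by positivity) (by nlinarith)

end Geometry

section Bubble

variable {k : ℕ} {p ε r : ℝ} {y : Fin (k + 1) → ℝ}

/-- The denominator `(ε + yₙ)² + |ȳ|²` of the bubble. -/
def bubbleDenom (ε : ℝ) (y : Fin (k + 1) → ℝ) : ℝ :=
  (ε + y (Fin.last k)) ^ 2 + ∑ i : Fin (k + 1), if (i : ℕ) < k then y i ^ 2 else 0

/-- The bubble `(ε / ((ε + yₙ)² + |ȳ|²)) ^ p`, for an arbitrary exponent. -/
noncomputable def bubble (p ε : ℝ) (y : Fin (k + 1) → ℝ) : ℝ :=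
  (ε / bubbleDenom ε y) ^ p

/-- The point `y + ε eₙ`, at height `ε` above `y`. -/
def raise (ε : ℝ) (y : Fin (k + 1) → ℝ) : Fin (k + 1) → ℝ :=
  y + Pi.single (Fin.last k) ε

theorem raise_last (ε : ℝ) (y : Fin (k + 1) → ℝ) :
    raise ε y (Fin.last k) = y (Fin.last k) + ε := by
  simp [raise]

theorem bubbleDenom_eq_sum_sq (ε : ℝ) (y : Fin (k + 1) → ℝ) :
    bubbleDenom ε y = ∑ a, raise ε y a ^ 2 := by
  simp only [bubbleDenom, raise, Fin.sum_univ_castSucc]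
  simp [add_comm]

theorem bubbleDenom_eq_euclNorm_sq (ε : ℝ) (y : Fin (k + 1) → ℝ) :
    bubbleDenom ε y = euclNorm y ^ 2 + 2 * ε * y (Fin.last k) + ε ^ 2 := by
  simp only [bubbleDenom, euclNorm_sq, Fin.sum_univ_castSucc, Fin.val_castSucc, Fin.is_lt,
    ↓reduceIte, Fin.val_last, lt_self_iff_false, add_zero]
  ring

theorem bubbleDenom_pos (hε : 0 < ε) (hy : 0 ≤ y (Fin.last k)) : 0 < bubbleDenom ε y := by
  rw [bubbleDenom_eq_euclNorm_sq]
  positivity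

theorem sq_le_bubbleDenom (hε : 0 < ε) (hy : 0 ≤ y (Fin.last k)) (hr : 0 ≤ r)
    (hry : r ≤ euclNorm y) : r ^ 2 ≤ bubbleDenom ε y := by
  rw [bubbleDenom_eq_euclNorm_sq]
  nlinarith [mul_nonneg hε.le hy]

theorem bubble_pos (p : ℝ) (hε : 0 < ε) (hy : 0 ≤ y (Fin.last k)) : 0 < bubble p ε y :=
  Real.rpow_pos_of_pos (div_pos hε (bubbleDenom_pos hε hy)) p

theorem hasFDerivAt_bubbleDenom (ε : ℝ) (y : Fin (k + 1) → ℝ) :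
    HasFDerivAt (bubbleDenom ε) (∑ a, (2 * raise ε y a) •
      ContinuousLinearMap.proj (R := ℝ) (φ := fun _ : Fin (k + 1) ↦ ℝ) a) y := by
  rw [funext (bubbleDenom_eq_sum_sq ε)]
  refine HasFDerivAt.fun_sum fun a _ ↦ ?_
  have h := (((ContinuousLinearMap.proj (R := ℝ) (φ := fun _ : Fin (k + 1) ↦ ℝ) a).hasFDerivAt
    (x := y)).add_const (Pi.single (M := fun _ ↦ ℝ) (Fin.last k) ε a)).pow 2
  simpa [raise, mul_add] using h

theorem hasDerivAt_const_div_rpow (p : ℝ) {c s : ℝ} (hc : 0 < c) (hs : 0 < s) :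
    HasDerivAt (fun s ↦ (c / s) ^ p) (-(p / s * (c / s) ^ p)) s := by
  have hdiv : HasDerivAt (fun s ↦ c / s) (c * -(s ^ 2)⁻¹) s := by
    simpa [div_eq_mul_inv] using (hasDerivAt_inv hs.ne').const_mul c
  convert hdiv.rpow_const (p := p) (Or.inl (by positivity)) using 1
  rw [Real.rpow_sub_one (by positivity)]
  field_simp

theorem hasFDerivAt_bubble (p : ℝ) (hε : 0 < ε) (hy : 0 ≤ y (Fin.last k)) :
    HasFDerivAt (bubble p ε) (-(p / bubbleDenom ε y * bubble p ε y) •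
      ∑ a, (2 * raise ε y a) •
        ContinuousLinearMap.proj (R := ℝ) (φ := fun _ : Fin (k + 1) ↦ ℝ) a) y :=
  (hasDerivAt_const_div_rpow p hε (bubbleDenom_pos hε hy)).comp_hasFDerivAt y
    (hasFDerivAt_bubbleDenom ε y)

theorem differentiableAt_bubble (p : ℝ) (hε : 0 < ε) (hy : 0 ≤ y (Fin.last k)) :
    DifferentiableAt ℝ (bubble p ε) y :=
  (hasFDerivAt_bubble p hε hy).differentiableAt

theorem partialDeriv_bubble (p : ℝ) (hε : 0 < ε) (hy : 0 ≤ y (Fin.last k)) (a : Fin (k + 1)) :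
    partialDeriv a (bubble p ε) y
      = -(2 * p * (raise ε y a / bubbleDenom ε y) * bubble p ε y) := by
  rw [partialDeriv, (hasFDerivAt_bubble p hε hy).fderiv]
  simp only [smul_apply, sum_apply, ContinuousLinearMap.proj_apply, Pi.single_apply, smul_eq_mul,
    mul_ite, mul_one, mul_zero, Finset.sum_ite_eq', Finset.mem_univ, ↓reduceIte]
  ring

theorem continuousOn_bubble (p : ℝ) (hε : 0 < ε) :
    ContinuousOn (bubble p ε) {y : Fin (k + 1) → ℝ | 0 ≤ y (Fin.last k)} := fun _ hy ↦
  (differentiableAt_bubble p hε hy).continuousAt.continuousWithinAt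

theorem continuousOn_partialDeriv_bubble (p : ℝ) (hε : 0 < ε) (a : Fin (k + 1)) :
    ContinuousOn (partialDeriv a (bubble p ε)) {y : Fin (k + 1) → ℝ | 0 ≤ y (Fin.last k)} := by
  have hdenom : Continuous (bubbleDenom (k := k) ε) :=
    continuous_iff_continuousAt.2 fun y ↦ (hasFDerivAt_bubbleDenom ε y).continuousAt
  refine ContinuousOn.congr ?_ fun y hy ↦ partialDeriv_bubble p hε hy a
  refine ((continuousOn_const.mul (ContinuousOn.div ?_ hdenom.continuousOn fun y hy ↦
    (bubbleDenom_pos hε hy).ne')).mul (continuousOn_bubble p hε)).neg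
  unfold raise
  fun_prop

theorem bubble_le (hp : 0 ≤ p) (hε : 0 < ε) (hr : 0 < r) (hy : 0 ≤ y (Fin.last k))
    (hry : r ≤ euclNorm y) : bubble p ε y ≤ (ε / r ^ 2) ^ p := by
  have hD := bubbleDenom_pos hε hy
  exact Real.rpow_le_rpow (by positivity)
    (div_le_div_of_nonneg_left hε.le (by positivity) (sq_le_bubbleDenom hε hy hr.le hry)) hp

theorem le_bubble (hp : 0 ≤ p) (hε : 0 < ε) (hεr : ε ≤ r) (hy : y (Fin.last k) = 0)
    (hyr : euclNorm y ≤ 2 * r) : (ε / (5 * r ^ 2)) ^ p ≤ bubble p ε y := by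
  have hr : 0 < r := hε.trans_le hεr
  have hD : bubbleDenom ε y ≤ 5 * r ^ 2 := by
    rw [bubbleDenom_eq_euclNorm_sq, hy]
    nlinarith [euclNorm_nonneg y]
  exact Real.rpow_le_rpow (by positivity)
    (div_le_div_of_nonneg_left hε.le (bubbleDenom_pos hε hy.ge) hD) hp

theorem abs_partialDeriv_bubble_le (hp : 0 ≤ p) (hε : 0 < ε) (hr : 0 < r)
    (hy : 0 ≤ y (Fin.last k)) (hry : r ≤ euclNorm y) (a : Fin (k + 1)) :
    |partialDeriv a (bubble p ε) y| ≤ 2 * p / r * (ε / r ^ 2) ^ p := by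
  have hD := bubbleDenom_pos hε hy
  have hsq : raise ε y a ^ 2 ≤ bubbleDenom ε y := by
    rw [bubbleDenom_eq_sum_sq, ← euclNorm_sq]
    exact sq_le_sq.2 ((abs_apply_le_euclNorm _ a).trans (le_abs_self _))
  have hquot : |raise ε y a / bubbleDenom ε y| ≤ 1 / r := by
    rw [abs_div, abs_of_pos hD, div_le_div_iff₀ hD hr, one_mul]
    refine abs_le_of_sq_le_sq' ?_ hD.le |>.2
    rw [mul_pow, sq_abs, sq (bubbleDenom ε y)]
    exact mul_le_mul hsq (sq_le_bubbleDenom hε hy hr.le hry) (by positivity) hD.le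
  rw [partialDeriv_bubble p hε hy a, abs_neg, abs_mul, abs_mul, abs_of_nonneg (by positivity),
    abs_of_pos (bubble_pos p hε hy), mul_div_assoc, ← mul_one_div p, ← mul_assoc]
  exact mul_le_mul (by gcongr) (bubble_le hp hε hr hy hry) (bubble_pos p hε hy).le (by positivity)

theorem partialDeriv_bubble_nonpos (hp : 0 ≤ p) (hε : 0 < ε) (hy : y (Fin.last k) = 0) :
    partialDeriv (Fin.last k) (bubble p ε) y ≤ 0 := by
  have hD := bubbleDenom_pos hε hy.ge
  have hU := bubble_pos p hε hy.ge
  rw [partialDeriv_bubble p hε hy.ge, raise_last, hy, zero_add]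
  exact neg_nonpos.2 (by positivity)

-- On the boundary `-∂ₙU / U = 2pε / (ε² + |y|²)`, and `2ε|y| ≤ ε² + |y|²`.
theorem mul_sq_partialDeriv_bubble_le (p : ℝ) (hε : 0 < ε) (hy : y (Fin.last k) = 0)
    (hry : r ≤ euclNorm y) :
    r * partialDeriv (Fin.last k) (bubble p ε) y ^ 2
      ≤ 2 * p * (-partialDeriv (Fin.last k) (bubble p ε) y * bubble p ε y) := by
  have hD := bubbleDenom_pos hε hy.ge
  have hU := bubble_pos p hε hy.ge
  have hDeq := bubbleDenom_eq_euclNorm_sq ε y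
  set D := bubbleDenom ε y
  set u := bubble p ε y
  have hquot : r * (ε / D) ≤ 1 := by
    rw [mul_div_assoc', div_le_one hD]
    rw [hy] at hDeq
    nlinarith [sq_nonneg (euclNorm y - ε), sq_nonneg (euclNorm y)]
  rw [partialDeriv_bubble p hε hy.ge, raise_last, hy, zero_add]
  calc r * (-(2 * p * (ε / D) * u)) ^ 2 = (2 * p) ^ 2 * (ε / D) * u ^ 2 * (r * (ε / D)) := by ring
    _ ≤ (2 * p) ^ 2 * (ε / D) * u ^ 2 * 1 := by gcongr
    _ = 2 * p * (-(-(2 * p * (ε / D) * u)) * u) := by ring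

end Bubble

section Tensors

variable {n k : ℕ}

/-- Twice the trace-free symmetric part `g_ab + g_ba - (2/n) (tr g) δ_ab` of a matrix. -/
noncomputable def tracelessSym (g : Fin n → Fin n → ℝ) (a b : Fin n) : ℝ :=
  g a b + g b a - 2 / (n : ℝ) * (∑ c, g c c) * (if a = b then 1 else 0)

/-- The conformal Killing operator `S_ab = ∂_a V_b + ∂_b V_a - (2/n) (div V) δ_ab`. -/
noncomputable def conformalKilling (V : (Fin n → ℝ) → Fin n → ℝ) (a b : Fin n) (x : Fin n → ℝ) :
    ℝ :=
  tracelessSym (fun a b ↦ partialDeriv a (fun w ↦ V w b) x) a b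

/-- The corrected tensor `T = H - S`. -/
noncomputable def correctedTensor (H : Fin n → Fin n → MvPolynomial (Fin n) ℝ)
    (V : (Fin n → ℝ) → Fin n → ℝ) (a b : Fin n) (x : Fin n → ℝ) : ℝ :=
  MvPolynomial.eval x (H a b) - conformalKilling V a b x

/-- The tensor `Q_{ab,c}`: the gradient `U ∂_c T_ab`, corrected by the terms in `∂U` that come from
the conformal change with factor `U`. -/
noncomputable def twistedGradient (U : (Fin n → ℝ) → ℝ) (T : Fin n → Fin n → (Fin n → ℝ) → ℝ)
    (a b c : Fin n) (x : Fin n → ℝ) : ℝ :=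
  U x * partialDeriv c (T a b) x
    - 2 / ((n : ℝ) - 2) * partialDeriv a U x * T b c x
    - 2 / ((n : ℝ) - 2) * partialDeriv b U x * T a c x
    + 2 / ((n : ℝ) - 2) * (∑ d, partialDeriv d U x * T a d x) * (if b = c then 1 else 0)
    + 2 / ((n : ℝ) - 2) * (∑ d, partialDeriv d U x * T b d x) * (if a = c then 1 else 0)

theorem abs_tracelessSym_le {g : Fin n → Fin n → ℝ} {B : ℝ} (hB : ∀ a b, |g a b| ≤ B)
    (a b : Fin n) : |tracelessSym g a b| ≤ 4 * B := by
  have hn : (0 : ℝ) < n := by exact_mod_cast a.pos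
  have hB0 : 0 ≤ B := (abs_nonneg _).trans (hB a b)
  have htrace : |∑ c, g c c| ≤ n * B := by
    simpa using (Finset.abs_sum_le_sum_abs (fun c ↦ g c c) Finset.univ).trans
      (Finset.sum_le_sum fun c _ ↦ hB c c)
  have hdelta : |(if a = b then (1 : ℝ) else 0)| ≤ 1 := by split_ifs <;> simp
  have htrace' : |2 / (n : ℝ) * (∑ c, g c c) * (if a = b then 1 else 0)| ≤ 2 * B := by
    rw [abs_mul, abs_mul, abs_of_pos (by positivity : (0 : ℝ) < 2 / n)]
    calc 2 / (n : ℝ) * |∑ c, g c c| * |(if a = b then (1 : ℝ) else 0)|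
        ≤ 2 / (n : ℝ) * (n * B) * 1 := by gcongr
      _ = 2 * B := by field_simp
  calc |tracelessSym g a b| ≤ |g a b| + |g b a|
        + |2 / (n : ℝ) * (∑ c, g c c) * (if a = b then 1 else 0)| :=
        (abs_sub _ _).trans (by gcongr; exact abs_add_le _ _)
    _ ≤ B + B + 2 * B := by gcongr <;> apply hB
    _ = 4 * B := by ring

theorem partialDeriv_tracelessSym {g : Fin n → Fin n → (Fin n → ℝ) → ℝ}
    (hg : ∀ a b, Differentiable ℝ (g a b)) (c a b : Fin n) (x : Fin n → ℝ) :
    partialDeriv c (fun y ↦ tracelessSym (fun a b ↦ g a b y) a b) x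
      = tracelessSym (fun a b ↦ partialDeriv c (g a b) x) a b := by
  have hderiv : HasFDerivAt (fun y ↦ tracelessSym (fun a b ↦ g a b y) a b) _ x :=
    ((hg a b x).hasFDerivAt.add (hg b a x).hasFDerivAt).sub
      (((HasFDerivAt.fun_sum (u := Finset.univ) fun c _ ↦ (hg c c x).hasFDerivAt).const_mul
        (2 / (n : ℝ))).mul_const (if a = b then (1 : ℝ) else 0))
  rw [partialDeriv, hderiv.fderiv]
  by_cases hab : a = b <;> simp [tracelessSym, partialDeriv, hab]

theorem contDiff_conformalKilling {l : ℕ} {V : (Fin n → ℝ) → Fin n → ℝ}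
    (hV : ContDiff ℝ (l + 1) V) (a b : Fin n) : ContDiff ℝ l (conformalKilling V a b) := by
  have hdV (a b : Fin n) : ContDiff ℝ l (partialDeriv a fun w ↦ V w b) :=
    contDiff_partialDeriv (contDiff_pi.1 hV b) a
  exact ((hdV a b).add (hdV b a)).sub
    ((contDiff_const.mul (ContDiff.sum fun c _ ↦ hdV c c)).mul contDiff_const)

theorem partialDeriv_conformalKilling {V : (Fin n → ℝ) → Fin n → ℝ} (hV : ContDiff ℝ 2 V)
    (c a b : Fin n) :
    partialDeriv c (conformalKilling V a b) = fun x ↦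
      tracelessSym (fun a b ↦ partialDeriv c (partialDeriv a fun w ↦ V w b) x) a b :=
  funext fun x ↦ partialDeriv_tracelessSym
    (fun a b ↦ differentiable_partialDeriv (contDiff_pi.1 hV b) a) c a b x

theorem iteratedFDeriv_apply_apply {l : ℕ} {V : (Fin n → ℝ) → Fin n → ℝ} (hV : ContDiff ℝ l V)
    (x : Fin n → ℝ) (v : Fin l → Fin n → ℝ) (b : Fin n) :
    iteratedFDeriv ℝ l (fun w ↦ V w b) x v = iteratedFDeriv ℝ l V x v b :=
  congrArg (· v) ((ContinuousLinearMap.proj (R := ℝ) (φ := fun _ : Fin n ↦ ℝ) b)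
    |>.iteratedFDeriv_comp_left hV.contDiffAt le_rfl)

theorem partialDeriv_partialDeriv {f : (Fin n → ℝ) → ℝ} (hf : ContDiff ℝ 2 f) (c a : Fin n) :
    partialDeriv c (partialDeriv a f)
      = fun x ↦ iteratedFDeriv ℝ 2 f x fun m ↦ Pi.single (![c, a] m) 1 := by
  funext x
  have hd : DifferentiableAt ℝ (fderiv ℝ f) x :=
    (hf.fderiv_right (m := 1) le_rfl).differentiable one_ne_zero x
  unfold partialDeriv
  simp [iteratedFDeriv_two_apply, fderiv_clm_apply hd (differentiableAt_const _)]

theorem abs_partialDeriv_conformalKilling_le {V : (Fin n → ℝ) → Fin n → ℝ} (hV : ContDiff ℝ 2 V)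
    {x : Fin n → ℝ} {B : ℝ}
    (hB : ∀ dirs : Fin 2 → Fin n,
      ‖iteratedFDeriv ℝ 2 V x fun m ↦ Pi.single (dirs m) 1‖ ≤ B) (c a b : Fin n) :
    |partialDeriv c (conformalKilling V a b) x| ≤ 4 * B := by
  rw [partialDeriv_conformalKilling hV]
  refine abs_tracelessSym_le (fun a b ↦ ?_) a b
  simp only [partialDeriv_partialDeriv (contDiff_pi.1 hV b), iteratedFDeriv_apply_apply hV]
  exact (norm_le_pi_norm _ b).trans (hB _)

theorem abs_partialDeriv_partialDeriv_conformalKilling_le {V : (Fin n → ℝ) → Fin n → ℝ}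
    (hV : ContDiff ℝ 3 V) {x : Fin n → ℝ} {B : ℝ}
    (hB : ∀ dirs : Fin 3 → Fin n,
      ‖iteratedFDeriv ℝ 3 V x fun m ↦ Pi.single (dirs m) 1‖ ≤ B) (e c a b : Fin n) :
    |partialDeriv e (partialDeriv c (conformalKilling V a b)) x| ≤ 4 * B := by
  have hV2 : ContDiff ℝ 2 V := hV.of_le (by norm_num)
  have hVb (b : Fin n) : ContDiff ℝ 3 fun w ↦ V w b := contDiff_pi.1 hV b
  have hdiff (a b : Fin n) : Differentiable ℝ (partialDeriv c (partialDeriv a fun w ↦ V w b)) :=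
    differentiable_partialDeriv (contDiff_partialDeriv (l := 2) (hVb b) a) c
  rw [partialDeriv_conformalKilling hV2, partialDeriv_tracelessSym hdiff]
  refine abs_tracelessSym_le (fun a b ↦ ?_) a b
  have hcons : (Fin.cons (Pi.single e 1) fun m ↦ Pi.single (![c, a] m) 1 : Fin 3 → Fin n → ℝ)
      = fun m ↦ Pi.single (![e, c, a] m) 1 := by
    funext m
    fin_cases m <;> rfl
  rw [partialDeriv_partialDeriv (contDiff_pi.1 hV2 b),
    partialDeriv_iteratedFDeriv (l := 2) (hVb b), hcons, iteratedFDeriv_apply_apply hV]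
  exact (norm_le_pi_norm _ b).trans (hB _)

theorem partialDeriv_castSucc_eq_zero {f : (Fin (k + 1) → ℝ) → ℝ} {x : Fin (k + 1) → ℝ}
    (hf : DifferentiableAt ℝ f x) (hzero : ∀ y, y (Fin.last k) = 0 → f y = 0)
    (hx : x (Fin.last k) = 0) (i : Fin k) : partialDeriv i.castSucc f x = 0 := by
  have hline : (fun t : ℝ ↦ f (x + t • Pi.single i.castSucc 1)) = fun _ ↦ 0 :=
    funext fun t ↦ hzero _ (by simp [hx, (Fin.castSucc_ne_last _).symm])
  rw [partialDeriv, ← hf.lineDeriv_eq_fderiv, lineDeriv, hline, deriv_const]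

theorem correctedTensor_castSucc_last_eq_zero
    {H : Fin (k + 1) → Fin (k + 1) → MvPolynomial (Fin (k + 1)) ℝ}
    {V : (Fin (k + 1) → ℝ) → Fin (k + 1) → ℝ} (hV : Differentiable ℝ V)
    (hH : ∀ i : Fin k, H i.castSucc (Fin.last k) = 0)
    (hVi : ∀ (i : Fin k) x, x (Fin.last k) = 0 →
      partialDeriv (Fin.last k) (fun w ↦ V w i.castSucc) x = 0)
    (hVn : ∀ x, x (Fin.last k) = 0 → V x (Fin.last k) = 0)
    {x : Fin (k + 1) → ℝ} (hx : x (Fin.last k) = 0) (i : Fin k) :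
    correctedTensor H V i.castSucc (Fin.last k) x = 0 := by
  have htan : partialDeriv i.castSucc (fun w ↦ V w (Fin.last k)) x = 0 :=
    partialDeriv_castSucc_eq_zero (differentiable_pi.1 hV _ x) hVn hx i
  simp [correctedTensor, conformalKilling, tracelessSym, hH i, hVi i x hx, htan,
    Fin.castSucc_ne_last]

theorem twistedGradient_castSucc_castSucc_last (U : (Fin (k + 1) → ℝ) → ℝ)
    (T : Fin (k + 1) → Fin (k + 1) → (Fin (k + 1) → ℝ) → ℝ) (i j : Fin k)
    (x : Fin (k + 1) → ℝ) :
    twistedGradient U T i.castSucc j.castSucc (Fin.last k) x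
      = U x * partialDeriv (Fin.last k) (T i.castSucc j.castSucc) x
        - 2 / ((k : ℝ) - 1) * partialDeriv i.castSucc U x * T j.castSucc (Fin.last k) x
        - 2 / ((k : ℝ) - 1) * partialDeriv j.castSucc U x * T i.castSucc (Fin.last k) x := by
  have hk : ((k + 1 : ℕ) : ℝ) - 2 = k - 1 := by push_cast; ring
  simp only [twistedGradient, Fin.castSucc_ne_last, if_false, mul_zero, add_zero, hk]

end Tensors

section Slabs

variable {k : ℕ}

theorem measurePreserving_slice :
    MeasurePreserving fun z : (Fin k → ℝ) × ℝ ↦ slice z.1 z.2 := by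
  have hcomp := (volume_preserving_piFinSuccAbove (fun _ : Fin (k + 1) ↦ ℝ) (Fin.last k)).symm.comp
    (Measure.measurePreserving_swap (μ := (volume : Measure (Fin k → ℝ)))
      (ν := (volume : Measure ℝ)))
  rw [← Measure.volume_eq_prod] at hcomp
  convert hcomp using 1
  funext z
  simp [MeasurableEquiv.piFinSuccAbove, Fin.insertNthEquiv, slice]

theorem measurableEmbedding_slice :
    MeasurableEmbedding fun z : (Fin k → ℝ) × ℝ ↦ slice z.1 z.2 :=
  continuous_slice.measurableEmbedding fun _ _ h ↦ Prod.ext_iff.2 (Fin.snoc_injective2 h)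

theorem mul_setIntegral_le_of_le_slice {A : Set (Fin k → ℝ)} (hA : IsCompact A)
    {Ω : Set (Fin (k + 1) → ℝ)} {h : ℝ} (hh : 0 ≤ h)
    (hΩ : ∀ x' ∈ A, ∀ t ∈ Set.Icc 0 h, slice x' t ∈ Ω) {f : (Fin k → ℝ) → ℝ} (hf : Continuous f)
    {q : (Fin (k + 1) → ℝ) → ℝ} (hq : IntegrableOn q Ω) (hq0 : ∀ x, 0 ≤ q x)
    (hfq : ∀ x' ∈ A, ∀ t ∈ Set.Icc 0 h, f x' ≤ q (slice x' t)) :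
    h * ∫ x' in A, f x' ≤ ∫ x in Ω, q x := by
  have himage : (fun z : (Fin k → ℝ) × ℝ ↦ slice z.1 z.2) '' (A ×ˢ Set.Icc 0 h) ⊆ Ω := by
    rintro _ ⟨z, hz, rfl⟩
    exact hΩ z.1 hz.1 z.2 hz.2
  have hqslab : IntegrableOn (fun z : (Fin k → ℝ) × ℝ ↦ q (slice z.1 z.2)) (A ×ˢ Set.Icc 0 h) :=
    (measurePreserving_slice.integrableOn_image measurableEmbedding_slice).1 (hq.mono_set himage)
  have hfslab : IntegrableOn (fun z : (Fin k → ℝ) × ℝ ↦ f z.1) (A ×ˢ Set.Icc 0 h) :=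
    (hf.comp continuous_fst).continuousOn.integrableOn_compact (hA.prod isCompact_Icc)
  calc h * ∫ x' in A, f x' = ∫ z in A ×ˢ Set.Icc 0 h, f z.1 := by
        have := setIntegral_prod_mul (μ := (volume : Measure (Fin k → ℝ)))
          (ν := (volume : Measure ℝ)) f (fun _ ↦ 1) A (Set.Icc 0 h)
        simp only [mul_one] at this
        rw [Measure.volume_eq_prod, this]
        simp [hh, mul_comm]
    _ ≤ ∫ z in A ×ˢ Set.Icc 0 h, q (slice z.1 z.2) :=
        setIntegral_mono_on hfslab hqslab (hA.measurableSet.prod measurableSet_Icc)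
          fun z hz ↦ hfq z.1 hz.1 z.2 hz.2
    _ = ∫ x in (fun z : (Fin k → ℝ) × ℝ ↦ slice z.1 z.2) '' (A ×ˢ Set.Icc 0 h), q x :=
        (measurePreserving_slice.setIntegral_image_emb measurableEmbedding_slice q _).symm
    _ ≤ ∫ x in Ω, q x :=
        setIntegral_mono_set hq (Filter.Eventually.of_forall hq0) himage.eventuallyLE

theorem integrableOn_upperShell {q : (Fin (k + 1) → ℝ) → ℝ}
    (hq : ContinuousOn q {x | 0 ≤ x (Fin.last k)}) (r : ℝ) : IntegrableOn q (upperShell k r) := by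
  have hcompact : IsCompact ({x | 0 ≤ x (Fin.last k)} ∩ annulus (k + 1) r (2 * r)) :=
    (isCompact_annulus (k + 1) r (2 * r)).inter_left
      (isClosed_le continuous_const (continuous_apply (Fin.last k)))
  exact ((hq.mono Set.inter_subset_left).integrableOn_compact hcompact).mono_set
    fun x hx ↦ ⟨hx.1, hx.2.1, hx.2.2.le⟩

end Slabs

section NearBoundary

variable {k : ℕ} {ε r A t : ℝ} {x' : Fin k → ℝ}

theorem abs_slice_sub_slice_zero_le {f : (Fin (k + 1) → ℝ) → ℝ} {M : ℝ} (ht : 0 ≤ t)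
    (hf : ∀ s ∈ Set.Icc 0 t, DifferentiableAt ℝ f (slice x' s))
    (hM : ∀ s ∈ Set.Icc 0 t, |partialDeriv (Fin.last k) f (slice x' s)| ≤ M) :
    |f (slice x' t) - f (slice x' 0)| ≤ M * t := by
  simpa using norm_image_sub_le_of_norm_deriv_le_segment'
    (fun s hs ↦ (hasDerivAt_comp_slice (hf s hs)).hasDerivWithinAt)
    (fun s hs ↦ hM s (Set.Ico_subset_Icc_self hs)) t (Set.right_mem_Icc.2 ht)

theorem abs_bubble_mul_sub_slice_zero_le {p B : ℝ} (hp : 0 ≤ p) (hε : 0 < ε) (hr : 0 < r)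
    (ht : 0 ≤ t) (hx' : ∀ s ∈ Set.Icc 0 t, slice x' s ∈ upperShell k r)
    {f : (Fin (k + 1) → ℝ) → ℝ} (hf : Differentiable ℝ f)
    (hfB : ∀ s ∈ Set.Icc 0 t, |f (slice x' s)| ≤ B)
    (hfB' : ∀ s ∈ Set.Icc 0 t, |partialDeriv (Fin.last k) f (slice x' s)| ≤ B / r) :
    |bubble p ε (slice x' t) * f (slice x' t) - bubble p ε (slice x' 0) * f (slice x' 0)|
      ≤ (2 * p + 1) * (ε / r ^ 2) ^ p * B / r * t := by
  have _ : 0 ≤ B := (abs_nonneg _).trans (hfB 0 (Set.left_mem_Icc.2 ht))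
  refine abs_slice_sub_slice_zero_le (f := fun y ↦ bubble p ε y * f y) ht
    (fun s hs ↦ (differentiableAt_bubble p hε (hx' s hs).1).mul (hf _)) fun s hs ↦ ?_
  obtain ⟨hheight, hlow, -⟩ := hx' s hs
  have hprod : partialDeriv (Fin.last k) (fun y ↦ bubble p ε y * f y) (slice x' s)
      = bubble p ε (slice x' s) * partialDeriv (Fin.last k) f (slice x' s)
        + partialDeriv (Fin.last k) (bubble p ε) (slice x' s) * f (slice x' s) := by
    simp only [partialDeriv, fderiv_fun_mul (differentiableAt_bubble p hε hheight) (hf _),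
      add_apply, smul_apply, smul_eq_mul]
    ring
  calc |partialDeriv (Fin.last k) (fun y ↦ bubble p ε y * f y) (slice x' s)|
      ≤ |bubble p ε (slice x' s)| * |partialDeriv (Fin.last k) f (slice x' s)|
        + |partialDeriv (Fin.last k) (bubble p ε) (slice x' s)| * |f (slice x' s)| := by
        rw [hprod, ← abs_mul, ← abs_mul]
        exact abs_add_le _ _
    _ ≤ (ε / r ^ 2) ^ p * (B / r) + 2 * p / r * (ε / r ^ 2) ^ p * B := by
        rw [abs_of_pos (bubble_pos p hε hheight)]
        gcongr
        · exact bubble_le hp hε hr hheight hlow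
        · exact hfB' s hs
        · exact abs_partialDeriv_bubble_le hp hε hr hheight hlow _
        · exact hfB s hs
    _ = (2 * p + 1) * (ε / r ^ 2) ^ p * B / r := by ring

/-- The exponent `(n - 2) / 2` of the bubble in dimension `n`. -/
noncomputable def bubbleExponent (n : ℕ) : ℝ :=
  ((n : ℝ) - 2) / 2

theorem two_mul_bubbleExponent_succ (k : ℕ) : 2 * bubbleExponent (k + 1) = k - 1 := by
  unfold bubbleExponent
  push_cast
  ring

theorem bubbleExponent_succ_nonneg (hk : 1 ≤ k) : 0 ≤ bubbleExponent (k + 1) := by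
  have : (1 : ℝ) ≤ k := by exact_mod_cast hk
  linarith [two_mul_bubbleExponent_succ k]

theorem sq_rpow_bubbleExponent_succ (hk : 1 ≤ k) {c : ℝ} (hc : 0 ≤ c) :
    (c ^ bubbleExponent (k + 1)) ^ 2 = c ^ (k - 1) := by
  rw [← Real.rpow_natCast, ← Real.rpow_mul hc, ← Real.rpow_natCast]
  push_cast [Nat.cast_sub hk]
  rw [mul_comm, two_mul_bubbleExponent_succ]

/-- Bounds for the normal derivatives of the tangential rows of `T` on the half shell
`B⁺_{2r} ∖ B⁺_r`: each derivative costs a factor `r⁻¹`. -/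
def NormalDerivBound (T : Fin (k + 1) → Fin (k + 1) → (Fin (k + 1) → ℝ) → ℝ) (r A : ℝ) : Prop :=
  ∀ x ∈ upperShell k r, ∀ (i : Fin k) (b : Fin (k + 1)),
    |partialDeriv (Fin.last k) (T i.castSucc b) x| ≤ A / r ∧
    |partialDeriv (Fin.last k) (partialDeriv (Fin.last k) (T i.castSucc b)) x| ≤ A / r ^ 2

variable {T : Fin (k + 1) → Fin (k + 1) → (Fin (k + 1) → ℝ) → ℝ}

theorem abs_partialDeriv_bubble_mul_le (hk : 2 ≤ k) (hε : 0 < ε) (hr : 0 < r) (ht : 0 ≤ t)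
    (hx' : ∀ s ∈ Set.Icc 0 t, slice x' s ∈ upperShell k r)
    (hT : ∀ i b, Differentiable ℝ (T i b)) (hTb : NormalDerivBound T r A)
    (hT0 : ∀ i : Fin k, T i.castSucc (Fin.last k) (slice x' 0) = 0) (i j : Fin k) :
    |2 / ((k : ℝ) - 1) * partialDeriv j.castSucc (bubble (bubbleExponent (k + 1)) ε) (slice x' t)
        * T i.castSucc (Fin.last k) (slice x' t)|
      ≤ 2 * (ε / r ^ 2) ^ bubbleExponent (k + 1) * A / r ^ 2 * t := by
  have hk1 : (0 : ℝ) < k - 1 := by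
    have : (2 : ℝ) ≤ k := by exact_mod_cast hk
    linarith
  obtain ⟨hheight, hlow, -⟩ := hx' t (Set.right_mem_Icc.2 ht)
  have hTt : |T i.castSucc (Fin.last k) (slice x' t)| ≤ A / r * t := by
    simpa [hT0 i] using abs_slice_sub_slice_zero_le (x' := x') ht
      (fun s _ ↦ hT i.castSucc (Fin.last k) (slice x' s)) fun s hs ↦ (hTb _ (hx' s hs) i _).1
  have hU := abs_partialDeriv_bubble_le (bubbleExponent_succ_nonneg (by lia : 1 ≤ k)) hε hr hheight
    hlow j.castSucc
  rw [two_mul_bubbleExponent_succ] at hU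
  rw [abs_mul, abs_mul, abs_of_pos (by positivity : 0 < 2 / ((k : ℝ) - 1))]
  calc 2 / ((k : ℝ) - 1) * _ * _
      ≤ 2 / ((k : ℝ) - 1) * (((k : ℝ) - 1) / r * (ε / r ^ 2) ^ bubbleExponent (k + 1))
        * (A / r * t) := by gcongr
    _ = 2 * (ε / r ^ 2) ^ bubbleExponent (k + 1) * A / r ^ 2 * t := by field_simp

theorem abs_twistedGradient_sub_le (hk : 2 ≤ k) (hε : 0 < ε) (hr : 0 < r) (ht : 0 ≤ t)
    (hx' : ∀ s ∈ Set.Icc 0 t, slice x' s ∈ upperShell k r)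
    (hT : ∀ i b, ContDiff ℝ 2 (T i b)) (hTb : NormalDerivBound T r A)
    (hT0 : ∀ i : Fin k, T i.castSucc (Fin.last k) (slice x' 0) = 0) (i j : Fin k) :
    |twistedGradient (bubble (bubbleExponent (k + 1)) ε) T i.castSucc j.castSucc (Fin.last k)
        (slice x' t) - bubble (bubbleExponent (k + 1)) ε (slice x' 0)
          * partialDeriv (Fin.last k) (T i.castSucc j.castSucc) (slice x' 0)|
      ≤ (k + 4) * (ε / r ^ 2) ^ bubbleExponent (k + 1) * A / r ^ 2 * t := by
  have hTdiff (i b) : Differentiable ℝ (T i b) := (hT i b).differentiable two_ne_zero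
  have hmain := abs_bubble_mul_sub_slice_zero_le (B := A / r)
    (bubbleExponent_succ_nonneg (by lia : 1 ≤ k)) hε hr ht hx'
    (differentiable_partialDeriv (hT i.castSucc j.castSucc) (Fin.last k))
    (fun s hs ↦ (hTb _ (hx' s hs) i _).1)
    (fun s hs ↦ (hTb _ (hx' s hs) i _).2.trans_eq (by field_simp))
  rw [two_mul_bubbleExponent_succ] at hmain
  have hij := abs_partialDeriv_bubble_mul_le hk hε hr ht hx' hTdiff hTb hT0 i j
  have hji := abs_partialDeriv_bubble_mul_le hk hε hr ht hx' hTdiff hTb hT0 j i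
  rw [twistedGradient_castSucc_castSucc_last, sub_right_comm, sub_right_comm (_ * _)]
  refine (abs_sub _ _).trans ((add_le_add_left (abs_sub _ _) _).trans
    ((add_le_add (add_le_add hmain hji) hij).trans_eq ?_))
  ring

end NearBoundary

section AnnulusEstimate

variable {k : ℕ} {ε r A δ κ : ℝ}
  {T : Fin (k + 1) → Fin (k + 1) → (Fin (k + 1) → ℝ) → ℝ}
  {h : Fin k → Fin k → (Fin k → ℝ) → ℝ} {σ : (Fin (k + 1) → ℝ) → ℝ}

theorem continuousOn_twistedGradient {n : ℕ} {U : (Fin n → ℝ) → ℝ}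
    {T : Fin n → Fin n → (Fin n → ℝ) → ℝ} {s : Set (Fin n → ℝ)} (hU : ContinuousOn U s)
    (hdU : ∀ a, ContinuousOn (partialDeriv a U) s) (hT : ∀ a b, ContDiff ℝ 1 (T a b))
    (a b c : Fin n) : ContinuousOn (twistedGradient U T a b c) s := by
  have hT0 (a b) : ContinuousOn (T a b) s := (hT a b).continuous.continuousOn
  have hdT (a b c) : ContinuousOn (partialDeriv c (T a b)) s :=
    (continuous_partialDeriv (hT a b) c).continuousOn
  unfold twistedGradient
  fun_prop

theorem integrableOn_sum_sq_twistedGradient_bubble (p : ℝ) (hε : 0 < ε)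
    (hT : ∀ a b, ContDiff ℝ 1 (T a b)) (r : ℝ) :
    IntegrableOn (fun x ↦ ∑ i : Fin k, ∑ j : Fin k,
      twistedGradient (bubble p ε) T i.castSucc j.castSucc (Fin.last k) x ^ 2)
      (upperShell k r) :=
  integrableOn_upperShell (continuousOn_finsetSum _ fun _ _ ↦ continuousOn_finsetSum _ fun _ _ ↦
    (continuousOn_twistedGradient (continuousOn_bubble p hε)
      (continuousOn_partialDeriv_bubble p hε) hT _ _ _).pow 2) r

/-- The boundary density `(-∂ₙU) U σ²` at the point `(x', 0)` of the boundary. -/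
noncomputable def boundaryDensity (U σ : (Fin (k + 1) → ℝ) → ℝ) (x' : Fin k → ℝ) : ℝ :=
  -partialDeriv (Fin.last k) U (slice x' 0) * U (slice x' 0) * σ (slice x' 0) ^ 2

theorem boundaryDensity_bubble_nonneg {p : ℝ} (hp : 0 ≤ p) (hε : 0 < ε)
    (σ : (Fin (k + 1) → ℝ) → ℝ) (x' : Fin k → ℝ) : 0 ≤ boundaryDensity (bubble p ε) σ x' := by
  have hlast := slice_last x' 0
  exact mul_nonneg (mul_nonneg (neg_nonneg.2 (partialDeriv_bubble_nonpos hp hε hlast))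
    (bubble_pos p hε hlast.ge).le) (sq_nonneg _)

theorem continuous_boundaryDensity_bubble (p : ℝ) (hε : 0 < ε) (hσ : Continuous σ) :
    Continuous (boundaryDensity (bubble p ε) σ) := by
  have hmem (x' : Fin k → ℝ) : slice x' 0 ∈ {y : Fin (k + 1) → ℝ | 0 ≤ y (Fin.last k)} :=
    (slice_last x' 0).ge
  exact (((continuousOn_partialDeriv_bubble p hε _).comp_continuous continuous_slice_zero
    hmem).neg.mul ((continuousOn_bubble p hε).comp_continuous continuous_slice_zero hmem)).mul
    ((hσ.comp continuous_slice_zero).pow 2)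

theorem mul_sq_mul_le_of_abs_sub_le {r u h τ w σ κ q E m : ℝ} (hr : 0 ≤ r)
    (hhτ : |u * (h - τ)| ≤ |κ * w * σ|) (hq : |q - u * τ| ≤ E) (hw : r * w ^ 2 ≤ m * (-w * u)) :
    r * (u * h) ^ 2 ≤ 2 * κ ^ 2 * m * (-w * u * σ ^ 2) + 4 * r * E ^ 2 + 4 * r * q ^ 2 := by
  have hhτ2 : (u * (h - τ)) ^ 2 ≤ κ ^ 2 * w ^ 2 * σ ^ 2 :=
    (sq_le_sq.2 hhτ).trans_eq (by ring)
  have hq2 : (q - u * τ) ^ 2 ≤ E ^ 2 := sq_le_sq.2 (hq.trans (le_abs_self E))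
  have hsplit : (u * h) ^ 2 ≤ 2 * (κ ^ 2 * w ^ 2 * σ ^ 2) + 4 * E ^ 2 + 4 * q ^ 2 := by
    nlinarith [sq_nonneg (u * (h - τ) - u * τ), sq_nonneg (q + (q - u * τ))]
  calc r * (u * h) ^ 2 ≤ r * (2 * (κ ^ 2 * w ^ 2 * σ ^ 2) + 4 * E ^ 2 + 4 * q ^ 2) := by gcongr
    _ = 2 * κ ^ 2 * (r * w ^ 2) * σ ^ 2 + 4 * r * E ^ 2 + 4 * r * q ^ 2 := by ring
    _ ≤ 2 * κ ^ 2 * (m * (-w * u)) * σ ^ 2 + 4 * r * E ^ 2 + 4 * r * q ^ 2 := by gcongr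
    _ = 2 * κ ^ 2 * m * (-w * u * σ ^ 2) + 4 * r * E ^ 2 + 4 * r * q ^ 2 := by ring

theorem pow_le_mul_sq_bubble (hk : 1 ≤ k) (hε : 0 < ε) (hεr : ε ≤ r) {y : Fin (k + 1) → ℝ}
    (hy : y (Fin.last k) = 0) (hyr : euclNorm y ≤ 2 * r) :
    (ε / r ^ 2) ^ (k - 1) ≤ 5 ^ (k - 1) * bubble (bubbleExponent (k + 1)) ε y ^ 2 := by
  have hr : 0 < r := hε.trans_le hεr
  calc (ε / r ^ 2) ^ (k - 1) = 5 ^ (k - 1) * (ε / (5 * r ^ 2)) ^ (k - 1) := by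
        rw [← mul_pow]
        congr 1
        field_simp
    _ = 5 ^ (k - 1) * ((ε / (5 * r ^ 2)) ^ bubbleExponent (k + 1)) ^ 2 := by
        rw [sq_rpow_bubbleExponent_succ hk (by positivity)]
    _ ≤ 5 ^ (k - 1) * bubble (bubbleExponent (k + 1)) ε y ^ 2 := by
        gcongr
        exact le_bubble (bubbleExponent_succ_nonneg hk) hε hεr hy hyr

theorem mul_sq_le_add_sq_twistedGradient (hk : 2 ≤ k) (hε : 0 < ε) (hεr : ε ≤ r) (hδ : δ ≤ 1)
    (hT : ∀ a b, ContDiff ℝ 2 (T a b)) (hTb : NormalDerivBound T r A)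
    {x' : Fin k → ℝ} (hx' : x' ∈ annulus k (4 * r / 3) (5 * r / 3))
    (hT0 : ∀ i : Fin k, T i.castSucc (Fin.last k) (slice x' 0) = 0) (i j : Fin k)
    (hh : |bubble (bubbleExponent (k + 1)) ε (slice x' 0)
        * (h i j x' - partialDeriv (Fin.last k) (T i.castSucc j.castSucc) (slice x' 0))|
      ≤ |κ * partialDeriv (Fin.last k) (bubble (bubbleExponent (k + 1)) ε) (slice x' 0)
        * σ (slice x' 0)|) {t : ℝ} (ht : t ∈ Set.Icc 0 (δ * r)) :
    r * (ε / r ^ 2) ^ (k - 1) * h i j x' ^ 2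
      ≤ 5 ^ (k - 1) * (2 * κ ^ 2 * (k - 1)
          * boundaryDensity (bubble (bubbleExponent (k + 1)) ε) σ x'
        + 4 * (k + 4) ^ 2 * A ^ 2 * δ ^ 2 * ((ε / r ^ 2) ^ (k - 1) / r)
        + 4 * r * twistedGradient (bubble (bubbleExponent (k + 1)) ε) T i.castSucc j.castSucc
          (Fin.last k) (slice x' t) ^ 2) := by
  have hr : 0 < r := hε.trans_le hεr
  have htr : t ≤ r := ht.2.trans (mul_le_of_le_one_left hr.le hδ)
  have hshell (s) (hs : s ∈ Set.Icc 0 t) : slice x' s ∈ upperShell k r :=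
    slice_mem_upperShell hr hx' ⟨hs.1, hs.2.trans htr⟩
  obtain ⟨-, hlow, hhigh⟩ := hshell 0 (Set.left_mem_Icc.2 ht.1)
  have hlast := slice_last x' 0
  have hA : 0 ≤ A / r := (abs_nonneg _).trans (hTb _ (hshell 0 (Set.left_mem_Icc.2 ht.1)) i 0).1
  have hE : (k + 4) * (ε / r ^ 2) ^ bubbleExponent (k + 1) * A / r ^ 2 * t
      ≤ (k + 4) * (ε / r ^ 2) ^ bubbleExponent (k + 1) * (A / r) * δ :=
    calc _ = (k + 4) * (ε / r ^ 2) ^ bubbleExponent (k + 1) * (A / r) * (t / r) := by field_simp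
      _ ≤ _ := by
        gcongr
        exact (div_le_iff₀ hr).2 ht.2
  have hQ := (abs_twistedGradient_sub_le hk hε hr ht.1 hshell hT hTb hT0 i j).trans hE
  have hw := mul_sq_partialDeriv_bubble_le (bubbleExponent (k + 1)) hε hlast hlow
  rw [two_mul_bubbleExponent_succ] at hw
  have hsplit := mul_sq_mul_le_of_abs_sub_le hr.le hh hQ hw
  calc r * (ε / r ^ 2) ^ (k - 1) * h i j x' ^ 2
      ≤ r * (5 ^ (k - 1) * bubble (bubbleExponent (k + 1)) ε (slice x' 0) ^ 2) * h i j x' ^ 2 := by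
        gcongr
        exact pow_le_mul_sq_bubble (by lia) hε hεr hlast hhigh.le
    _ = 5 ^ (k - 1) * (r * (bubble (bubbleExponent (k + 1)) ε (slice x' 0) * h i j x') ^ 2) := by
        ring
    _ ≤ _ := by
        refine mul_le_mul_of_nonneg_left (hsplit.trans_eq ?_) (by positivity)
        rw [← sq_rpow_bubbleExponent_succ (by lia : 1 ≤ k) (by positivity : 0 ≤ ε / r ^ 2)]
        unfold boundaryDensity
        field_simp

theorem mul_sum_sq_le_add_sum_sq_twistedGradient (hk : 2 ≤ k) (hε : 0 < ε) (hεr : ε ≤ r)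
    (hδ : δ ≤ 1) (hT : ∀ a b, ContDiff ℝ 2 (T a b)) (hTb : NormalDerivBound T r A)
    {x' : Fin k → ℝ} (hx' : x' ∈ annulus k (4 * r / 3) (5 * r / 3))
    (hT0 : ∀ i : Fin k, T i.castSucc (Fin.last k) (slice x' 0) = 0)
    (hh : ∀ i j, |bubble (bubbleExponent (k + 1)) ε (slice x' 0)
        * (h i j x' - partialDeriv (Fin.last k) (T i.castSucc j.castSucc) (slice x' 0))|
      ≤ |κ * partialDeriv (Fin.last k) (bubble (bubbleExponent (k + 1)) ε) (slice x' 0)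
        * σ (slice x' 0)|) {t : ℝ} (ht : t ∈ Set.Icc 0 (δ * r)) :
    r * (ε / r ^ 2) ^ (k - 1) * ∑ i, ∑ j, h i j x' ^ 2
      ≤ 2 * k ^ 2 * 5 ^ (k - 1) * (k - 1) * κ ^ 2
          * boundaryDensity (bubble (bubbleExponent (k + 1)) ε) σ x'
        + 4 * k ^ 2 * 5 ^ (k - 1) * (k + 4) ^ 2 * A ^ 2 * δ ^ 2 * ((ε / r ^ 2) ^ (k - 1) / r)
        + 4 * 5 ^ (k - 1) * r * ∑ i : Fin k, ∑ j : Fin k,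
            twistedGradient (bubble (bubbleExponent (k + 1)) ε) T i.castSucc j.castSucc
              (Fin.last k) (slice x' t) ^ 2 := by
  rw [Finset.mul_sum, Finset.sum_congr rfl fun i _ ↦ Finset.mul_sum _ _ _]
  refine (Finset.sum_le_sum fun i _ ↦ Finset.sum_le_sum fun j _ ↦
    mul_sq_le_add_sq_twistedGradient hk hε hεr hδ hT hTb hx' hT0 i j (hh i j) ht).trans_eq ?_
  simp only [← Finset.mul_sum, Finset.sum_add_distrib, Finset.sum_const, Finset.card_univ,
    Fintype.card_fin, nsmul_eq_mul]
  ring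

theorem setIntegral_annulus_le_of_le_slice {a b : ℝ} (ha : 0 ≤ a) (hb : 0 ≤ b) (hr : 0 < r)
    (hδ0 : 0 < δ) (hδ : δ ≤ 1) {f P : (Fin k → ℝ) → ℝ} (hf : Continuous f) (hP : Continuous P)
    (hP0 : ∀ x', 0 ≤ P x') {q : (Fin (k + 1) → ℝ) → ℝ} (hq : IntegrableOn q (upperShell k r))
    (hq0 : ∀ x, 0 ≤ q x)
    (hfq : ∀ x' ∈ annulus k (4 * r / 3) (5 * r / 3), ∀ t ∈ Set.Icc 0 (δ * r),
      f x' ≤ a * P x' + b + q (slice x' t)) :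
    ∫ x' in annulus k (4 * r / 3) (5 * r / 3), f x'
      ≤ a * (∫ x' in annulus k r (2 * r), P x') + b * (4 * r) ^ k
        + (δ * r)⁻¹ * ∫ x in upperShell k r, q x := by
  have hcompact (s t : ℝ) := isCompact_annulus k s t
  have hint {g : (Fin k → ℝ) → ℝ} (hg : Continuous g) (s t : ℝ) : IntegrableOn g (annulus k s t) :=
    hg.continuousOn.integrableOn_compact (hcompact s t)
  have hslab := mul_setIntegral_le_of_le_slice (f := fun x' ↦ f x' - (a * P x' + b))
    (hcompact (4 * r / 3) (5 * r / 3)) (mul_nonneg hδ0.le hr.le)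
    (fun x' hx' t ht ↦ slice_mem_upperShell hr hx'
      ⟨ht.1, ht.2.trans (mul_le_of_le_one_left hr.le hδ)⟩)
    (hf.sub ((hP.const_mul a).add_const b)) hq hq0
    (fun x' hx' t ht ↦ sub_le_iff_le_add'.2 (hfq x' hx' t ht))
  have hsplit : ∫ x' in annulus k (4 * r / 3) (5 * r / 3), (f x' - (a * P x' + b))
      = (∫ x' in annulus k (4 * r / 3) (5 * r / 3), f x')
        - (a * (∫ x' in annulus k (4 * r / 3) (5 * r / 3), P x')
          + b * volume.real (annulus k (4 * r / 3) (5 * r / 3))) := by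
    rw [integral_sub (hint hf _ _) (hint ((hP.const_mul a).add_const b) _ _),
      integral_add (hint (hP.const_mul a) _ _) (hint continuous_const _ _), integral_const_mul,
      setIntegral_const, smul_eq_mul, mul_comm b]
  have hPmono : ∫ x' in annulus k (4 * r / 3) (5 * r / 3), P x'
      ≤ ∫ x' in annulus k r (2 * r), P x' :=
    setIntegral_mono_set (hint hP _ _) (Filter.Eventually.of_forall hP0)
      (LE.le.eventuallyLE fun x' hx' ↦ ⟨by linarith [hx'.1], by linarith [hx'.2]⟩)
  have hvol : volume.real (annulus k (4 * r / 3) (5 * r / 3)) ≤ (4 * r) ^ k :=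
    (volume_real_annulus_le k _ (by positivity)).trans
      (pow_le_pow_left₀ (by positivity) (by linarith) k)
  rw [hsplit, ← le_inv_mul_iff₀ (by positivity), sub_le_iff_le_add'] at hslab
  exact hslab.trans (by gcongr)

theorem mul_setIntegral_sum_sq_le (hk : 2 ≤ k) (hε : 0 < ε) (hεr : ε ≤ r) (hδ0 : 0 < δ)
    (hδ : δ ≤ 1) (hT : ∀ a b, ContDiff ℝ 2 (T a b)) (hTb : NormalDerivBound T r A)
    (hT0 : ∀ x' (i : Fin k), T i.castSucc (Fin.last k) (slice x' 0) = 0)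
    (hhc : ∀ i j, Continuous (h i j)) (hσ : Continuous σ)
    (hh : ∀ x' i j, |bubble (bubbleExponent (k + 1)) ε (slice x' 0)
        * (h i j x' - partialDeriv (Fin.last k) (T i.castSucc j.castSucc) (slice x' 0))|
      ≤ |κ * partialDeriv (Fin.last k) (bubble (bubbleExponent (k + 1)) ε) (slice x' 0)
        * σ (slice x' 0)|) :
    r * (ε / r ^ 2) ^ (k - 1)
        * ∫ x' in annulus k (4 * r / 3) (5 * r / 3), ∑ i, ∑ j, h i j x' ^ 2
      ≤ 2 * k ^ 2 * 5 ^ (k - 1) * (k - 1) * κ ^ 2 * (∫ x' in annulus k r (2 * r),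
            boundaryDensity (bubble (bubbleExponent (k + 1)) ε) σ x')
        + 4 ^ (k + 1) * k ^ 2 * 5 ^ (k - 1) * (k + 4) ^ 2 * A ^ 2 * δ ^ 2 * (ε / r) ^ (k - 1)
        + 4 * 5 ^ (k - 1) / δ * ∫ x in upperShell k r, ∑ i : Fin k, ∑ j : Fin k,
            twistedGradient (bubble (bubbleExponent (k + 1)) ε) T i.castSucc j.castSucc
              (Fin.last k) x ^ 2 := by
  have hr : 0 < r := hε.trans_le hεr
  have hk1 : (0 : ℝ) ≤ k - 1 := by
    have : (2 : ℝ) ≤ k := by exact_mod_cast hk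
    linarith
  have hkey := setIntegral_annulus_le_of_le_slice
    (mul_nonneg (mul_nonneg (by positivity) hk1) (sq_nonneg κ)) (by positivity) hr hδ0 hδ
    (f := fun x' ↦ r * (ε / r ^ 2) ^ (k - 1) * ∑ i, ∑ j, h i j x' ^ 2) (by fun_prop)
    (continuous_boundaryDensity_bubble (bubbleExponent (k + 1)) hε hσ)
    (boundaryDensity_bubble_nonneg (bubbleExponent_succ_nonneg (by lia : 1 ≤ k)) hε σ)
    ((integrableOn_sum_sq_twistedGradient_bubble (bubbleExponent (k + 1)) hε
      (fun a b ↦ (hT a b).of_le one_le_two) r).const_mul (4 * 5 ^ (k - 1) * r))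
    (fun x ↦ by positivity)
    (fun x' hx' t ht ↦ mul_sum_sq_le_add_sum_sq_twistedGradient hk hε hεr hδ hT hTb hx' (hT0 x')
      (hh x') ht)
  rw [integral_const_mul, integral_const_mul] at hkey
  have hpow : (ε / r ^ 2) ^ (k - 1) / r * (4 * r) ^ k = 4 ^ k * (ε / r) ^ (k - 1) := by
    obtain ⟨l, rfl⟩ : ∃ l, k = l + 1 := ⟨k - 1, by lia⟩
    rw [Nat.add_sub_cancel, mul_pow, div_pow, div_pow, ← pow_mul, pow_mul']
    field_simp
    ring
  refine hkey.trans_eq (congrArg₂ (· + ·) (congrArg₂ (· + ·) rfl ?_) ?_)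
  · rw [mul_assoc, hpow]
    ring
  · field_simp

end AnnulusEstimate

section TangentialSums

variable {k : ℕ}

/-- The sum of `f i j` over the tangential indices `i, j < k` of `ℝ^{k+1}`. -/
def tangentialSum (f : Fin (k + 1) → Fin (k + 1) → ℝ) : ℝ :=
  ∑ i : Fin (k + 1), ∑ j : Fin (k + 1), if (i : ℕ) < k ∧ (j : ℕ) < k then f i j else 0

theorem tangentialSum_eq_sum (f : Fin (k + 1) → Fin (k + 1) → ℝ) :
    tangentialSum f = ∑ i : Fin k, ∑ j : Fin k, f i.castSucc j.castSucc := by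
  simp [tangentialSum, Fin.sum_univ_castSucc]

theorem mul_tangentialSum (c : ℝ) (f : Fin (k + 1) → Fin (k + 1) → ℝ) :
    c * tangentialSum f = tangentialSum fun i j ↦ c * f i j := by
  simp only [tangentialSum_eq_sum, Finset.mul_sum]

theorem tangentialSum_le_tangentialSum {f g : Fin (k + 1) → Fin (k + 1) → ℝ}
    (hfg : ∀ i j : Fin k, f i.castSucc j.castSucc ≤ g i.castSucc j.castSucc) :
    tangentialSum f ≤ tangentialSum g := by
  simp only [tangentialSum_eq_sum]
  exact Finset.sum_le_sum fun i _ ↦ Finset.sum_le_sum fun j _ ↦ hfg i j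

theorem le_tangentialSum {f : Fin (k + 1) → Fin (k + 1) → ℝ} (hf : ∀ i j, 0 ≤ f i j)
    (i j : Fin k) : f i.castSucc j.castSucc ≤ tangentialSum f := by
  rw [tangentialSum_eq_sum]
  exact (Finset.single_le_sum (f := fun j : Fin k ↦ f i.castSucc j.castSucc)
    (fun j _ ↦ hf _ _) (Finset.mem_univ j)).trans
    (Finset.single_le_sum (f := fun i : Fin k ↦ ∑ j : Fin k, f i.castSucc j.castSucc)
      (fun i _ ↦ Finset.sum_nonneg fun j _ ↦ hf _ _) (Finset.mem_univ i))

theorem sq_tangentialSum_le (f : Fin (k + 1) → Fin (k + 1) → ℝ) :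
    tangentialSum f ^ 2 ≤ k ^ 2 * tangentialSum fun i j ↦ f i j ^ 2 := by
  simp only [tangentialSum_eq_sum, ← Finset.sum_product']
  simpa [sq] using sq_sum_le_card_mul_sum_sq (s := Finset.univ ×ˢ Finset.univ)
    (f := fun ij : Fin k × Fin k ↦ f ij.1.castSucc ij.2.castSucc)

end TangentialSums

section CorrectedTensorBounds

open MvPolynomial

variable {σ : Type*} {d : ℕ} {r : ℝ}

theorem abs_eval_pderiv_le {p : MvPolynomial σ ℝ} (hp : p.totalDegree ≤ d) (hr : 0 < r)
    {x : σ → ℝ} (hx : ∀ a, |x a| ≤ 2 * r) (c : σ) :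
    |eval x (pderiv c p)| ≤ d * (2 ^ d * coeffNorm p r) / r := by
  rw [le_div_iff₀' hr]
  have _ := coeffNorm_nonneg (pderiv c p) (by positivity : 0 ≤ 2 * r)
  calc r * |eval x (pderiv c p)| ≤ 2 * r * coeffNorm (pderiv c p) (2 * r) := by
        gcongr
        · linarith
        · exact abs_eval_le_coeffNorm hx _
    _ ≤ d * coeffNorm p (2 * r) := mul_coeffNorm_pderiv_le hp c (by positivity)
    _ ≤ d * (2 ^ d * coeffNorm p r) := by
        gcongr
        exact coeffNorm_two_mul_le hp hr.le

theorem abs_eval_pderiv_pderiv_le {p : MvPolynomial σ ℝ} (hp : p.totalDegree ≤ d) (hr : 0 < r)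
    {x : σ → ℝ} (hx : ∀ a, |x a| ≤ 2 * r) (c e : σ) :
    |eval x (pderiv e (pderiv c p))| ≤ d ^ 2 * (2 ^ d * coeffNorm p r) / r ^ 2 := by
  have hdc := (totalDegree_pderiv_le c p).trans hp
  calc |eval x (pderiv e (pderiv c p))| ≤ d * (2 ^ d * coeffNorm (pderiv c p) r) / r :=
        abs_eval_pderiv_le hdc hr hx e
    _ = d * 2 ^ d * (r * coeffNorm (pderiv c p) r) / r ^ 2 := by field_simp
    _ ≤ d * 2 ^ d * (d * coeffNorm p r) / r ^ 2 := by
        gcongr ?_ * ?_ / _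
        exact mul_coeffNorm_pderiv_le hp c hr.le
    _ = d ^ 2 * (2 ^ d * coeffNorm p r) / r ^ 2 := by ring

theorem zpow_add_one_sub_le {ε R : ℝ} {m l : ℕ} (hε : 0 < ε) (hεr : ε ≤ r) (hrR : r ≤ R)
    (hR : R ≤ 2 * r) (hm : m ≤ d) :
    (ε + R) ^ ((m : ℤ) + 1 - ((l + 1 : ℕ) : ℤ)) ≤ 3 ^ d / r ^ l * r ^ m := by
  have hr : 0 < r := hε.trans_le hεr
  have hεR : 0 < ε + R := by linarith
  calc (ε + R) ^ ((m : ℤ) + 1 - ((l + 1 : ℕ) : ℤ)) = (ε + R) ^ m / (ε + R) ^ l := by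
        rw [show (m : ℤ) + 1 - ((l + 1 : ℕ) : ℤ) = m - l by push_cast; ring,
          zpow_sub₀ hεR.ne', zpow_natCast, zpow_natCast]
    _ ≤ (3 * r) ^ m / r ^ l := by gcongr <;> linarith
    _ = 3 ^ m / r ^ l * r ^ m := by ring
    _ ≤ 3 ^ d / r ^ l * r ^ m := by
        gcongr
        norm_num

variable {k : ℕ} {ε C₀ : ℝ} {H : Fin (k + 1) → Fin (k + 1) → MvPolynomial (Fin (k + 1)) ℝ}
  {V : (Fin (k + 1) → ℝ) → Fin (k + 1) → ℝ}

/-- The majorant `∑_{i,j,α} |h_{ij,α}| (ε + |x|)^{|α| + 1 - l}` for the `l`-th derivatives of the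
corrector field. -/
noncomputable def correctorMajorant (H : Fin (k + 1) → Fin (k + 1) → MvPolynomial (Fin (k + 1)) ℝ)
    (ε : ℝ) (l : ℕ) (x : Fin (k + 1) → ℝ) : ℝ :=
  tangentialSum fun i j ↦ ∑ m ∈ (H i j).support,
    |(H i j).coeff m| * (ε + euclNorm x) ^ ((m.degree : ℤ) + 1 - (l : ℤ))

theorem correctorMajorant_succ_le
    (hH : ∀ i j : Fin k, (H i.castSucc j.castSucc).totalDegree ≤ d) (hε : 0 < ε) (hεr : ε ≤ r)
    {x : Fin (k + 1) → ℝ} (hx : x ∈ upperShell k r) (l : ℕ) :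
    correctorMajorant H ε (l + 1) x
      ≤ 3 ^ d * tangentialSum (fun i j ↦ coeffNorm (H i j) r) / r ^ l := by
  rw [correctorMajorant, mul_div_right_comm, mul_tangentialSum]
  refine tangentialSum_le_tangentialSum fun i j ↦ ?_
  rw [coeffNorm, Finset.mul_sum]
  refine Finset.sum_le_sum fun m hm ↦ ?_
  rw [mul_left_comm]
  gcongr
  exact zpow_add_one_sub_le hε hεr hx.2.1 hx.2.2.le (degree_le_of_mem_support (hH i j) hm)

theorem partialDeriv_correctedTensor (hV : ContDiff ℝ 2 V) (c a b : Fin (k + 1)) :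
    partialDeriv c (correctedTensor H V a b) = fun x ↦
      eval x (pderiv c (H a b)) - partialDeriv c (conformalKilling V a b) x := by
  funext x
  have hS : Differentiable ℝ (conformalKilling V a b) :=
    (contDiff_conformalKilling (l := 1) hV a b).differentiable one_ne_zero
  have hH := partialDeriv_sub ((contDiff_eval (H a b) (l := 1)).differentiable one_ne_zero) hS c x
  rw [partialDeriv_eval] at hH
  exact hH

theorem partialDeriv_partialDeriv_correctedTensor (hV : ContDiff ℝ 3 V) (e c a b : Fin (k + 1))
    (x : Fin (k + 1) → ℝ) :
    partialDeriv e (partialDeriv c (correctedTensor H V a b)) x =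
      eval x (pderiv e (pderiv c (H a b)))
        - partialDeriv e (partialDeriv c (conformalKilling V a b)) x := by
  have hdS : Differentiable ℝ (partialDeriv c (conformalKilling V a b)) :=
    differentiable_partialDeriv (contDiff_conformalKilling (l := 2) hV a b) c
  rw [partialDeriv_correctedTensor (hV.of_le (by norm_num)), partialDeriv_sub
    ((contDiff_eval (pderiv c (H a b)) (l := 1)).differentiable one_ne_zero) hdS,
    partialDeriv_eval]

theorem contDiff_correctedTensor {l : ℕ} (hV : ContDiff ℝ (l + 1) V) (a b : Fin (k + 1)) :
    ContDiff ℝ l (correctedTensor H V a b) :=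
  (contDiff_eval (H a b) (l := l)).sub (contDiff_conformalKilling hV a b)

theorem normalDerivBound_correctedTensor
    (hH : ∀ i j : Fin k, (H i.castSucc j.castSucc).totalDegree ≤ d)
    (hHn : ∀ i : Fin k, H i.castSucc (Fin.last k) = 0) (hV : ContDiff ℝ 3 V) (hC₀ : 0 ≤ C₀)
    (hVb : ∀ l, 2 ≤ l → l ≤ 3 → ∀ (dirs : Fin l → Fin (k + 1)) x, 0 ≤ x (Fin.last k) →
      ‖iteratedFDeriv ℝ l V x fun m ↦ Pi.single (dirs m) 1‖ ≤ C₀ * correctorMajorant H ε l x)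
    (hε : 0 < ε) (hεr : ε ≤ r) :
    NormalDerivBound (correctedTensor H V) r
      ((d ^ 2 * 2 ^ d + 4 * C₀ * 3 ^ d) * tangentialSum fun i j ↦ coeffNorm (H i j) r) := by
  intro x hx i b
  have hr : 0 < r := hε.trans_le hεr
  have hxabs (a) : |x a| ≤ 2 * r := (abs_apply_le_euclNorm x a).trans hx.2.2.le
  set M := tangentialSum fun i j ↦ coeffNorm (H i j) r
  have hnonneg (i j) : 0 ≤ coeffNorm (H i j) r := coeffNorm_nonneg _ hr.le
  obtain ⟨hdeg, hcoeff⟩ :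
      (H i.castSucc b).totalDegree ≤ d ∧ coeffNorm (H i.castSucc b) r ≤ M := by
    induction b using Fin.lastCases with
    | last =>
      simp only [hHn i, totalDegree_zero, zero_le, true_and]
      exact (hnonneg _ _).trans (le_tangentialSum hnonneg i i)
    | cast j => exact ⟨hH i j, le_tangentialSum hnonneg i j⟩
  have hVr (l : ℕ) (hl : 1 ≤ l) (hl' : l ≤ 2) (dirs : Fin (l + 1) → Fin (k + 1)) :
      ‖iteratedFDeriv ℝ (l + 1) V x fun m ↦ Pi.single (dirs m) 1‖ ≤ C₀ * (3 ^ d * M / r ^ l) :=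
    (hVb (l + 1) (by lia) (by lia) dirs x hx.1).trans
      (mul_le_mul_of_nonneg_left (correctorMajorant_succ_le hH hε hεr hx l) hC₀)
  have hdd : (d : ℝ) ≤ d ^ 2 := by exact_mod_cast Nat.le_self_pow two_ne_zero d
  constructor
  · rw [partialDeriv_correctedTensor (hV.of_le (by norm_num))]
    calc _ ≤ d * (2 ^ d * coeffNorm (H i.castSucc b) r) / r + 4 * (C₀ * (3 ^ d * M / r ^ 1)) :=
          (abs_sub _ _).trans (add_le_add (abs_eval_pderiv_le hdeg hr hxabs _)
            (abs_partialDeriv_conformalKilling_le (hV.of_le (by norm_num))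
              (hVr 1 le_rfl one_le_two) _ _ _))
      _ ≤ d ^ 2 * (2 ^ d * M) / r + 4 * (C₀ * (3 ^ d * M / r ^ 1)) := by
          have := hnonneg i.castSucc b
          gcongr
      _ = (d ^ 2 * 2 ^ d + 4 * C₀ * 3 ^ d) * M / r := by ring
  · rw [partialDeriv_partialDeriv_correctedTensor hV]
    calc _ ≤ d ^ 2 * (2 ^ d * coeffNorm (H i.castSucc b) r) / r ^ 2
            + 4 * (C₀ * (3 ^ d * M / r ^ 2)) :=
          (abs_sub _ _).trans (add_le_add (abs_eval_pderiv_pderiv_le hdeg hr hxabs _ _)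
            (abs_partialDeriv_partialDeriv_conformalKilling_le hV (hVr 2 one_le_two le_rfl)
              _ _ _ _))
      _ ≤ d ^ 2 * (2 ^ d * M) / r ^ 2 + 4 * (C₀ * (3 ^ d * M / r ^ 2)) := by gcongr
      _ = (d ^ 2 * 2 ^ d + 4 * C₀ * 3 ^ d) * M / r ^ 2 := by ring

end CorrectedTensorBounds

section Estimate

open MvPolynomial

variable {k d : ℕ} {ε r δ C₀ κ : ℝ}
  {H : Fin (k + 1) → Fin (k + 1) → MvPolynomial (Fin (k + 1)) ℝ}
  {V : (Fin (k + 1) → ℝ) → Fin (k + 1) → ℝ}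

theorem sq_tangentialSum_coeffNorm_le
    (hH : ∀ i j : Fin k, (H i.castSucc j.castSucc).totalDegree ≤ d) (r : ℝ) :
    tangentialSum (fun i j ↦ coeffNorm (H i j) r) ^ 2
      ≤ k ^ 2 * (d + 1) ^ (k + 1) * tangentialSum fun i j ↦
          ∑ m ∈ (H i j).support, (H i j).coeff m ^ 2 * (r ^ m.degree) ^ 2 := by
  refine (sq_tangentialSum_le _).trans ?_
  rw [mul_assoc, mul_tangentialSum ((d + 1 : ℝ) ^ (k + 1))]
  exact mul_le_mul_of_nonneg_left (tangentialSum_le_tangentialSum fun i j ↦ by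
    simpa using sq_coeffNorm_le (hH i j) r) (by positivity)

/-- The constant in front of the error term `δ² (ε/r)^{n-2} ∑ h² r^{2|α|}` in dimension `n = k + 1`,
for coefficients of degree at most `d` and a corrector field with constant `C₀`. -/
noncomputable def errorConst (k d : ℕ) (C₀ : ℝ) : ℝ :=
  4 ^ (k + 1) * k ^ 2 * 5 ^ (k - 1) * (k + 4) ^ 2 * (d ^ 2 * 2 ^ d + 4 * C₀ * 3 ^ d) ^ 2
    * (k ^ 2 * (d + 1) ^ (k + 1))

theorem errorConst_nonneg (k d : ℕ) (C₀ : ℝ) : 0 ≤ errorConst k d C₀ := by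
  unfold errorConst
  positivity

theorem mul_setIntegral_sq_pderiv_le (hk : 2 ≤ k) (hC₀ : 0 ≤ C₀) (hε : 0 < ε) (hεr : ε ≤ r)
    (hδ0 : 0 < δ) (hδ : δ ≤ 1) (hH : ∀ i j : Fin k, (H i.castSucc j.castSucc).totalDegree ≤ d)
    (hHn : ∀ i : Fin k, H i.castSucc (Fin.last k) = 0) (hV : ContDiff ℝ 3 V)
    (hVi : ∀ (i : Fin k) x, x (Fin.last k) = 0 →
      partialDeriv (Fin.last k) (fun w ↦ V w i.castSucc) x = 0)
    (hVn : ∀ x, x (Fin.last k) = 0 → V x (Fin.last k) = 0)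
    (hVb : ∀ l, 2 ≤ l → l ≤ 3 → ∀ (dirs : Fin l → Fin (k + 1)) x, 0 ≤ x (Fin.last k) →
      ‖iteratedFDeriv ℝ l V x fun m ↦ Pi.single (dirs m) 1‖ ≤ C₀ * correctorMajorant H ε l x)
    (hS : ∀ (i j : Fin k) x, x (Fin.last k) = 0 →
      |bubble (bubbleExponent (k + 1)) ε x
          * partialDeriv (Fin.last k) (conformalKilling V i.castSucc j.castSucc) x|
        ≤ |κ * partialDeriv (Fin.last k) (bubble (bubbleExponent (k + 1)) ε) x
          * conformalKilling V (Fin.last k) (Fin.last k) x|) :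
    r * (ε / r ^ 2) ^ (k - 1) * (∫ x' in annulus k (4 * r / 3) (5 * r / 3),
        tangentialSum fun i j ↦ eval (slice x' 0) (pderiv (Fin.last k) (H i j)) ^ 2)
      ≤ 2 * k ^ 2 * 5 ^ (k - 1) * (k - 1) * κ ^ 2 * (∫ x' in annulus k r (2 * r),
          boundaryDensity (bubble (bubbleExponent (k + 1)) ε)
            (conformalKilling V (Fin.last k) (Fin.last k)) x')
        + errorConst k d C₀ * δ ^ 2 * ((ε / r) ^ (k - 1) * tangentialSum fun i j ↦
            ∑ m ∈ (H i j).support, (H i j).coeff m ^ 2 * (r ^ m.degree) ^ 2)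
        + 4 * 5 ^ (k - 1) / δ * ∫ x in upperShell k r, tangentialSum fun i j ↦
            twistedGradient (bubble (bubbleExponent (k + 1)) ε) (correctedTensor H V) i j
              (Fin.last k) x ^ 2 := by
  have hr : 0 < r := hε.trans_le hεr
  have hV2 : ContDiff ℝ 2 V := hV.of_le (by norm_num)
  have hest := mul_setIntegral_sum_sq_le (κ := κ)
    (h := fun i j x' ↦ eval (slice x' 0) (pderiv (Fin.last k) (H i.castSucc j.castSucc)))
    (σ := conformalKilling V (Fin.last k) (Fin.last k)) hk hε hεr hδ0 hδ
    (contDiff_correctedTensor (l := 2) hV)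
    (normalDerivBound_correctedTensor hH hHn hV hC₀ hVb hε hεr)
    (fun x' i ↦ correctedTensor_castSucc_last_eq_zero (hV.differentiable three_ne_zero) hHn hVi hVn
      (slice_last x' 0) i)
    (fun i j ↦ (contDiff_eval _ (l := 0)).continuous.comp continuous_slice_zero)
    (contDiff_conformalKilling (l := 1) hV2 _ _).continuous
    (fun x' i j ↦ by
      rw [partialDeriv_correctedTensor hV2, sub_sub_cancel]
      exact hS i j _ (slice_last x' 0))
  have hM := sq_tangentialSum_coeffNorm_le hH r
  simp only [tangentialSum_eq_sum] at hest hM ⊢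
  refine hest.trans (add_le_add_left (add_le_add_right ?_ _) _)
  rw [errorConst, mul_pow]
  calc _ = 4 ^ (k + 1) * k ^ 2 * 5 ^ (k - 1) * (k + 4) ^ 2 * (d ^ 2 * 2 ^ d + 4 * C₀ * 3 ^ d) ^ 2
          * δ ^ 2 * (ε / r) ^ (k - 1)
          * (∑ i : Fin k, ∑ j : Fin k, coeffNorm (H i.castSucc j.castSucc) r) ^ 2 := by ring
    _ ≤ _ := mul_le_mul_of_nonneg_left hM (by positivity)
    _ = _ := by ring

end Estimate

section Scaling

open MvPolynomial

variable {k : ℕ} {ε r θ : ℝ}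

theorem pow_mul_zpow_five_sub (hk : 1 ≤ k) (hr : 0 < r) (ε : ℝ) :
    ε ^ (k - 1) * r ^ ((5 : ℤ) - 2 * ((k + 1 : ℕ) : ℤ)) = r * (ε / r ^ 2) ^ (k - 1) := by
  have hexp : (5 : ℤ) - 2 * ((k + 1 : ℕ) : ℤ) = 1 - ((2 * (k - 1) : ℕ) : ℤ) := by lia
  rw [hexp, zpow_sub₀ hr.ne', zpow_one, zpow_natCast, div_pow, ← pow_mul]
  ring

theorem pow_mul_zpow_two_mul_add_two_sub (hk : 1 ≤ k) (hr : 0 < r) (ε : ℝ) (m : ℕ) :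
    ε ^ (k - 1) * r ^ (2 * (m : ℤ) + 2 - ((k + 1 : ℕ) : ℤ)) = (ε / r) ^ (k - 1) * (r ^ m) ^ 2 := by
  have hexp : 2 * (m : ℤ) + 2 - ((k + 1 : ℕ) : ℤ) = ((m * 2 : ℕ) : ℤ) - ((k - 1 : ℕ) : ℤ) := by lia
  rw [hexp, zpow_sub₀ hr.ne', zpow_natCast, zpow_natCast, div_pow, pow_mul]
  ring

theorem pow_mul_tangentialSum_sq_coeff (hk : 1 ≤ k) (hr : 0 < r) (ε : ℝ)
    (H : Fin (k + 1) → Fin (k + 1) → MvPolynomial (Fin (k + 1)) ℝ) :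
    (ε ^ (k - 1) * tangentialSum fun i j ↦ ∑ m ∈ (H i j).support,
        (H i j).coeff m ^ 2 * r ^ (2 * (m.degree : ℤ) + 2 - ((k + 1 : ℕ) : ℤ)))
      = (ε / r) ^ (k - 1) * tangentialSum fun i j ↦
          ∑ m ∈ (H i j).support, (H i j).coeff m ^ 2 * (r ^ m.degree) ^ 2 := by
  have hterm (p : MvPolynomial (Fin (k + 1)) ℝ) (m : Fin (k + 1) →₀ ℕ) :
      ε ^ (k - 1) * (p.coeff m ^ 2 * r ^ (2 * (m.degree : ℤ) + 2 - ((k + 1 : ℕ) : ℤ)))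
        = (ε / r) ^ (k - 1) * (p.coeff m ^ 2 * (r ^ m.degree) ^ 2) := by
    rw [mul_left_comm, pow_mul_zpow_two_mul_add_two_sub hk hr, mul_left_comm]
  simp only [mul_tangentialSum, Finset.mul_sum, hterm]

theorem mul_sq_div_one_add_le {K : ℝ} (hK : 0 ≤ K) (hθ : 0 ≤ θ) (hθ1 : θ ≤ 1) :
    K * (θ / (1 + K)) ^ 2 ≤ θ := by
  calc K * (θ / (1 + K)) ^ 2 = K / (1 + K) * (θ / (1 + K)) * θ := by ring
    _ ≤ 1 * 1 * θ := by
        gcongr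
        · exact div_le_one_of_le₀ (by linarith) (by linarith)
        · exact div_le_one_of_le₀ (by linarith) (by linarith)
    _ = θ := by ring

theorem abs_mul_le_of_eq_mul_inv {u f c v s : ℝ} {q : Prop} [Decidable q] (hu : u ≠ 0)
    (hf : f = c * u⁻¹ * v * s * if q then 1 else 0) : |u * f| ≤ |c * v * s| := by
  rw [hf]
  split_ifs
  · rw [show u * (c * u⁻¹ * v * s * 1) = c * v * s by field_simp]
  · simpa using abs_nonneg (c * v * s)

theorem sum_cast_eq_degree {σ : Type*} (m : σ →₀ ℕ) :
    (m.sum fun _ e ↦ (e : ℤ)) = (m.degree : ℤ) := by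
  simp [Finsupp.sum, Finsupp.degree_apply]

end Scaling

end HalfSpaceBubble

open HalfSpaceBubble in
theorem stmt_6_general (k d : ℕ) (hk : 2 ≤ k) (C₀ κ : ℝ) (hC₀ : 0 ≤ C₀) :
    ∃ C : ℝ, 0 < C ∧ ∀ ε r : ℝ, 0 < ε → ε ≤ r →
    ∀ H : Fin (k + 1) → Fin (k + 1) → MvPolynomial (Fin (k + 1)) ℝ,
      (∀ i j : Fin k, (H i.castSucc j.castSucc).totalDegree ≤ d) →
      (∀ i : Fin k, H i.castSucc (Fin.last k) = 0) →
    ∀ V : (Fin (k + 1) → ℝ) → Fin (k + 1) → ℝ, ContDiff ℝ 3 V →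
      (∀ (i : Fin k) x, x (Fin.last k) = 0 →
        partialDeriv (Fin.last k) (fun w ↦ V w i.castSucc) x = 0) →
      (∀ x, x (Fin.last k) = 0 → V x (Fin.last k) = 0) →
      (∀ l, 2 ≤ l → l ≤ 3 → ∀ (dirs : Fin l → Fin (k + 1)) x, 0 ≤ x (Fin.last k) →
        ‖iteratedFDeriv ℝ l V x fun m ↦ Pi.single (dirs m) 1‖ ≤ C₀ * correctorMajorant H ε l x) →
      (∀ (i j : Fin k) x, x (Fin.last k) = 0 →
        |bubble (bubbleExponent (k + 1)) ε x
            * partialDeriv (Fin.last k) (conformalKilling V i.castSucc j.castSucc) x|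
          ≤ |κ * partialDeriv (Fin.last k) (bubble (bubbleExponent (k + 1)) ε) x
            * conformalKilling V (Fin.last k) (Fin.last k) x|) →
    ∀ θ : ℝ, 0 < θ → θ ≤ 1 →
      ε ^ (k - 1) * r ^ ((5 : ℤ) - 2 * ((k + 1 : ℕ) : ℤ))
          * (∫ x' in annulus k (4 * r / 3) (5 * r / 3), tangentialSum fun i j ↦
              MvPolynomial.eval (slice x' 0) (MvPolynomial.pderiv (Fin.last k) (H i j)) ^ 2)
        ≤ θ * ε ^ (k - 1) * (tangentialSum fun i j ↦ ∑ m ∈ (H i j).support,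
              (H i j).coeff m ^ 2 * r ^ (2 * (m.degree : ℤ) + 2 - ((k + 1 : ℕ) : ℤ)))
          + C * (∫ x' in annulus k r (2 * r),
              boundaryDensity (bubble (bubbleExponent (k + 1)) ε)
                (conformalKilling V (Fin.last k) (Fin.last k)) x')
          + C / θ * ∫ x in upperShell k r, tangentialSum fun i j ↦
              twistedGradient (bubble (bubbleExponent (k + 1)) ε) (correctedTensor H V) i j
                (Fin.last k) x ^ 2 := by
  have hk1 : 1 ≤ k := one_le_two.trans hk
  have hk1' : (0 : ℝ) ≤ k - 1 := sub_nonneg.2 (by exact_mod_cast hk1)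
  set K := errorConst k d C₀
  have hK : 0 ≤ K := errorConst_nonneg k d C₀
  refine ⟨2 * k ^ 2 * 5 ^ (k - 1) * (k - 1) * κ ^ 2 + 4 * 5 ^ (k - 1) * (1 + K), by positivity, ?_⟩
  intro ε r hε hεr H hH hHn V hV hVi hVn hVb hS θ hθ hθ1
  have hr : 0 < r := hε.trans_le hεr
  have hδ : θ / (1 + K) ≤ 1 := div_le_one_of_le₀ (by linarith) (by linarith)
  rw [pow_mul_zpow_five_sub hk1 hr, mul_assoc θ, pow_mul_tangentialSum_sq_coeff hk1 hr]
  refine (mul_setIntegral_sq_pderiv_le hk hC₀ hε hεr (by positivity) hδ hH hHn hV hVi hVn hVb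
    hS).trans ?_
  have hdensity := boundaryDensity_bubble_nonneg (k := k) (bubbleExponent_succ_nonneg hk1) hε
    (conformalKilling V (Fin.last k) (Fin.last k))
  rw [add_comm (θ * _)]
  refine add_le_add (add_le_add ?_ ?_) ?_
  · refine mul_le_mul_of_nonneg_right ?_ (integral_nonneg hdensity)
    exact le_add_of_nonneg_right (by positivity)
  · refine mul_le_mul_of_nonneg_right (mul_sq_div_one_add_le hK hθ.le hθ1) ?_
    rw [tangentialSum_eq_sum]
    positivity
  · refine mul_le_mul_of_nonneg_right ?_ (integral_nonneg fun x ↦ ?_)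
    · rw [div_div_eq_mul_div]
      gcongr
      exact le_add_of_nonneg_left (by positivity)
    · rw [tangentialSum_eq_sum]
      positivity

/-- with the notation of the paper (bubble `U_ε`, polynomial tensor `H` with
coefficients `h_{ij,α}`, corrector vector field `V`, `S`, `T = H − S`, `Q_{ab,c}`, and the
boundary identity for `∂_nS_{ij}`), there is `C = C(n, C₀) > 0` such that for all
`θ ∈ (0,1)` and `r ≥ ε`:
`ε^{n−2} r^{5−2n} ∫_{4r/3≤|x̄|≤5r/3} Σ (∂_nH_{ij})² ≤ θ ε^{n−2} Σ h² r^{2|α|+2−n}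
  + C ∫_{r≤|x̄|≤2r} (−∂_nU_ε) U_ε S_{nn}² + (C/θ) ∫_{B⁺_{2r}∖B⁺_r} Σ Q_{ij,n}²`. -/
theorem stmt_6 (n : ℕ) (hn : 4 ≤ n) (C₀ : ℝ) (hC₀ : 0 < C₀) :
    ∃ C : ℝ, 0 < C ∧
    ∀ ε ρ : ℝ, 0 < ε → 0 < ρ →
    ∀ U : (Fin n → ℝ) → ℝ,
      (∀ y : Fin n → ℝ, U y =
        (ε / ((ε + y ⟨n - 1, by omega⟩) ^ 2
          + ∑ i : Fin n, if (i : ℕ) < n - 1 then y i ^ 2 else 0)) ^ (((n : ℝ) - 2) / 2)) →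
    ∀ H : Fin n → Fin n → MvPolynomial (Fin n) ℝ,
      (∀ a b : Fin n, ∀ m ∈ (H a b).support,
        1 ≤ m.sum (fun _ e => e) ∧ m.sum (fun _ e => e) ≤ (n - 2) / 2) →
      (∀ a b : Fin n, H a b = H b a) →
      ((∑ a : Fin n, H a a) = 0) →
      (∀ a : Fin n, H a ⟨n - 1, by omega⟩ = 0) →
      (∀ i j k : Fin n, (i : ℕ) < n - 1 → (j : ℕ) < n - 1 → (k : ℕ) < n - 1 →
        MvPolynomial.eval (0 : Fin n → ℝ) (MvPolynomial.pderiv k (H i j)) = 0) →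
      (∀ i : Fin n, (i : ℕ) < n - 1 → ∀ x : Fin n → ℝ, x ⟨n - 1, by omega⟩ = 0 →
        (∑ j : Fin n, if (j : ℕ) < n - 1 then x j * MvPolynomial.eval x (H i j) else 0) = 0) →
    ∀ η : ℝ → ℝ, ContDiff ℝ (⊤ : ℕ∞) η → (∀ t : ℝ, 0 ≤ η t ∧ η t ≤ 1) →
      (∀ t : ℝ, 0 ≤ t → t ≤ 4 / 3 → η t = 1) → (∀ t : ℝ, 5 / 3 ≤ t → η t = 0) →
    ∀ V : (Fin n → ℝ) → Fin n → ℝ, ContDiff ℝ (⊤ : ℕ∞) V →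
      -- (i) the divergence-form equation on ℝⁿ₊
      (∀ a : Fin n, ∀ x : Fin n → ℝ, 0 ≤ x ⟨n - 1, by omega⟩ →
        (∑ b : Fin n, fderiv ℝ (fun z : Fin n → ℝ =>
          U z ^ (2 * (n : ℝ) / ((n : ℝ) - 2))
            * (η (Real.sqrt (∑ c : Fin n, z c ^ 2) / ρ) * MvPolynomial.eval z (H a b)
              - fderiv ℝ (fun w : Fin n → ℝ => V w b) z (Pi.single a 1)
              - fderiv ℝ (fun w : Fin n → ℝ => V w a) z (Pi.single b 1)
              + 2 / (n : ℝ)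
                  * (∑ c : Fin n, fderiv ℝ (fun w : Fin n → ℝ => V w c) z (Pi.single c 1))
                  * (if a = b then 1 else 0))) x (Pi.single b 1)) = 0) →
      -- (ii) the boundary conditions on ∂ℝⁿ₊
      (∀ i : Fin n, (i : ℕ) < n - 1 → ∀ x : Fin n → ℝ, x ⟨n - 1, by omega⟩ = 0 →
        fderiv ℝ (fun w : Fin n → ℝ => V w i) x (Pi.single (⟨n - 1, by omega⟩ : Fin n) 1) = 0
          ∧ V x ⟨n - 1, by omega⟩ = 0) →
      -- (iii) the derivative bounds up to order 3 on ℝⁿ₊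
      (∀ k : ℕ, k ≤ 3 → ∀ dirs : Fin k → Fin n, ∀ x : Fin n → ℝ, 0 ≤ x ⟨n - 1, by omega⟩ →
        ‖iteratedFDeriv ℝ k V x (fun m => Pi.single (dirs m) 1)‖
          ≤ C₀ * ∑ i : Fin n, ∑ j : Fin n,
              if (i : ℕ) < n - 1 ∧ (j : ℕ) < n - 1 then
                ∑ m ∈ (H i j).support, |MvPolynomial.coeff m (H i j)|
                  * (ε + Real.sqrt (∑ c : Fin n, x c ^ 2))
                      ^ ((m.sum (fun _ e => e) : ℤ) + 1 - (k : ℤ))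
              else 0) →
    ∀ S : Fin n → Fin n → (Fin n → ℝ) → ℝ,
      (∀ (a b : Fin n) (x : Fin n → ℝ), S a b x =
        fderiv ℝ (fun w : Fin n → ℝ => V w b) x (Pi.single a 1)
          + fderiv ℝ (fun w : Fin n → ℝ => V w a) x (Pi.single b 1)
          - 2 / (n : ℝ)
              * (∑ c : Fin n, fderiv ℝ (fun w : Fin n → ℝ => V w c) x (Pi.single c 1))
              * (if a = b then 1 else 0)) →
    ∀ T : Fin n → Fin n → (Fin n → ℝ) → ℝ,
      (∀ (a b : Fin n) (x : Fin n → ℝ), T a b x = MvPolynomial.eval x (H a b) - S a b x) →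
    ∀ Q : Fin n → Fin n → Fin n → (Fin n → ℝ) → ℝ,
      (∀ (a b c : Fin n) (x : Fin n → ℝ), Q a b c x =
        U x * fderiv ℝ (T a b) x (Pi.single c 1)
          - 2 / ((n : ℝ) - 2) * fderiv ℝ U x (Pi.single a 1) * T b c x
          - 2 / ((n : ℝ) - 2) * fderiv ℝ U x (Pi.single b 1) * T a c x
          + 2 / ((n : ℝ) - 2)
              * (∑ d : Fin n, fderiv ℝ U x (Pi.single d 1) * T a d x)
              * (if b = c then 1 else 0)
          + 2 / ((n : ℝ) - 2)
              * (∑ d : Fin n, fderiv ℝ U x (Pi.single d 1) * T b d x)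
              * (if a = c then 1 else 0)) →
      -- the boundary identity for ∂_nS_{ij}
      (∀ i j : Fin n, (i : ℕ) < n - 1 → (j : ℕ) < n - 1 →
        ∀ x : Fin n → ℝ, x ⟨n - 1, by omega⟩ = 0 →
        fderiv ℝ (S i j) x (Pi.single (⟨n - 1, by omega⟩ : Fin n) 1)
          = 2 * (n : ℝ) / (((n : ℝ) - 1) * ((n : ℝ) - 2)) * (U x)⁻¹
              * fderiv ℝ U x (Pi.single (⟨n - 1, by omega⟩ : Fin n) 1)
              * S ⟨n - 1, by omega⟩ ⟨n - 1, by omega⟩ x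
              * (if i = j then 1 else 0)) →
    ∀ θ : ℝ, 0 < θ → θ < 1 → ∀ r : ℝ, ε ≤ r →
      ε ^ (n - 2) * r ^ ((5 : ℤ) - 2 * (n : ℤ))
          * ∫ x' in {x' : Fin (n - 1) → ℝ |
              4 * r / 3 ≤ Real.sqrt (∑ i : Fin (n - 1), x' i ^ 2)
                ∧ Real.sqrt (∑ i : Fin (n - 1), x' i ^ 2) ≤ 5 * r / 3},
            (∑ i : Fin n, ∑ j : Fin n,
              if (i : ℕ) < n - 1 ∧ (j : ℕ) < n - 1 then
                (MvPolynomial.eval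
                    (fun a : Fin n => if h : (a : ℕ) < n - 1 then x' ⟨(a : ℕ), h⟩ else 0)
                    (MvPolynomial.pderiv (⟨n - 1, by omega⟩ : Fin n) (H i j))) ^ 2
              else 0)
        ≤ θ * ε ^ (n - 2) * (∑ i : Fin n, ∑ j : Fin n,
              if (i : ℕ) < n - 1 ∧ (j : ℕ) < n - 1 then
                ∑ m ∈ (H i j).support,
                  (MvPolynomial.coeff m (H i j)) ^ 2
                    * r ^ (2 * (m.sum (fun _ e => e) : ℤ) + 2 - (n : ℤ))
              else 0)
          + C * (∫ x' in {x' : Fin (n - 1) → ℝ |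
                r ≤ Real.sqrt (∑ i : Fin (n - 1), x' i ^ 2)
                  ∧ Real.sqrt (∑ i : Fin (n - 1), x' i ^ 2) ≤ 2 * r},
              (-(fderiv ℝ U (fun a : Fin n => if h : (a : ℕ) < n - 1 then x' ⟨(a : ℕ), h⟩ else 0)
                    (Pi.single (⟨n - 1, by omega⟩ : Fin n) 1)))
                * U (fun a : Fin n => if h : (a : ℕ) < n - 1 then x' ⟨(a : ℕ), h⟩ else 0)
                * (S ⟨n - 1, by omega⟩ ⟨n - 1, by omega⟩
                    (fun a : Fin n => if h : (a : ℕ) < n - 1 then x' ⟨(a : ℕ), h⟩ else 0)) ^ 2)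
          + C / θ * ∫ x in {x : Fin n → ℝ | 0 ≤ x ⟨n - 1, by omega⟩
                ∧ r ≤ Real.sqrt (∑ a : Fin n, x a ^ 2)
                ∧ Real.sqrt (∑ a : Fin n, x a ^ 2) < 2 * r},
              ∑ i : Fin n, ∑ j : Fin n,
                if (i : ℕ) < n - 1 ∧ (j : ℕ) < n - 1 then
                  (Q i j ⟨n - 1, by omega⟩ x) ^ 2
                else 0 := by
  obtain ⟨k, rfl⟩ : ∃ k, n = k + 1 := ⟨n - 1, by omega⟩
  obtain ⟨C, hC, hestimate⟩ := stmt_6_general k ((k + 1 - 2) / 2) (by omega) C₀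
    (2 * ((k + 1 : ℕ) : ℝ) / ((((k + 1 : ℕ) : ℝ) - 1) * (((k + 1 : ℕ) : ℝ) - 2))) hC₀.le
  refine ⟨C, hC, ?_⟩
  intro ε ρ hε _ U hU H hdeg _ _ hHn _ _ η _ _ _ _ V hV _ hVbd hVb S hS T hT Q hQ hSn θ hθ hθ1 r hεr
  obtain rfl : U = HalfSpaceBubble.bubble (HalfSpaceBubble.bubbleExponent (k + 1)) ε := funext hU
  obtain rfl : S = HalfSpaceBubble.conformalKilling V :=
    funext fun a ↦ funext fun b ↦ funext (hS a b)
  obtain rfl : T = HalfSpaceBubble.correctedTensor H V :=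
    funext fun a ↦ funext fun b ↦ funext (hT a b)
  obtain rfl : Q = HalfSpaceBubble.twistedGradient _ _ :=
    funext fun a ↦ funext fun b ↦ funext fun c ↦ funext (hQ a b c)
  simp only [HalfSpaceBubble.sum_cast_eq_degree] at hVb ⊢
  exact hestimate ε r hε hεr H
    (fun i j ↦ Finset.sup_le fun m hm ↦ (hdeg i.castSucc j.castSucc m hm).2)
    (fun i ↦ hHn i.castSucc) V (mod_cast contDiff_infty.1 hV 3)
    (fun i x hx ↦ (hVbd i.castSucc i.2 x hx).1)
    (fun x hx ↦ (hVbd 0 (show 0 < k by omega) x hx).2)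
    (fun l _ hl ↦ hVb l hl)
    (fun i j x hx ↦ HalfSpaceBubble.abs_mul_le_of_eq_mul_inv
      (HalfSpaceBubble.bubble_pos _ hε hx.ge).ne'
      (hSn i.castSucc j.castSucc i.2 j.2 x hx)) θ hθ hθ1.le
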